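/- arXiv:math/0610942 — 9 statements merged into one kernel-verified Lean document; each statement's English description precedes it below -/
import Mathlib

section
/- Let d ≥ 2 be an integer, let p, q, r ∈ [1,∞), let C ≥ 1, and let A > 0. If ‖T[f]‖_{L^q(L^r),N} ≤ A ‖f‖_{L^p(ℝ^d)} holds for every nonnegative measurable function f on ℝ^d, then necessarily 1 + (d−1)/q ≥ d/p. -/
open MeasureTheory ENNReal

noncomputable section

/-- `ℝ^n` with the Euclidean structure. We model `ℝ^d` as `Euc (d-1) × ℝ`. -/
abbrev Euc (n : ℕ) := EuclideanSpace ℝ (Fin n)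

/-- The local x-ray transform: `T[f](ξ,x) = ∫_0^1 f (x + t(ξ + e_d)) dt`. -/
def xrayT {n : ℕ} (f : Euc n × ℝ → ℝ≥0∞) (ξ x : Euc n) : ℝ≥0∞ :=
  ∫⁻ t in Set.Ioc (0:ℝ) 1, f (x + t • ξ, t)

/-- The Nikodym-order mixed norm `‖T[f]‖_{L^q(L^r),N}`. -/
def nikodymMixedNorm {n : ℕ} (q r C : ℝ) (f : Euc n × ℝ → ℝ≥0∞) : ℝ≥0∞ :=
  (∫⁻ x : Euc n, (∫⁻ ξ in Metric.ball (0 : Euc n) C, xrayT f ξ x ^ r) ^ (q / r)) ^ (1 / q)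

/-- `‖f‖_{L^p}` for a nonnegative (extended-real-valued) function. -/
def lpNorm {α : Type*} [MeasureSpace α] (p : ℝ) (f : α → ℝ≥0∞) : ℝ≥0∞ :=
  (∫⁻ z, f z ^ p) ^ (1 / p)

lemma xray_ge {n : ℕ} (δ : ℝ) (hδ : 0 < δ) (hδ1 : δ ≤ 1) (ξ x : Euc n)
    (hξ : ξ ∈ Metric.ball (0 : Euc n) 1) (hx : x ∈ Metric.ball (0 : Euc n) δ) :
    ENNReal.ofReal δ ≤ xrayT (Set.indicator (Metric.ball (0 : Euc n) (2*δ) ×ˢ Set.Ioc 0 δ)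
      (fun _ => (1 : ℝ≥0∞))) ξ x := by
  unfold xrayT
  calc ENNReal.ofReal δ = ∫⁻ t in Set.Ioc (0:ℝ) δ, 1 := by simp
    _ ≤ ∫⁻ t in Set.Ioc (0:ℝ) δ, (Set.indicator (Metric.ball (0 : Euc n) (2*δ) ×ˢ Set.Ioc 0 δ)
      (fun _ => (1 : ℝ≥0∞))) (x + t • ξ, t) := by
        refine setLIntegral_mono' measurableSet_Ioc fun t ht => ?_
        rw [Set.indicator_of_mem]
        refine ⟨?_, ht⟩
        simp only [mem_ball_zero_iff] at *
        have h1 := norm_add_le x (t • ξ)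
        rw [norm_smul, Real.norm_of_nonneg ht.1.le] at h1
        have : t * ‖ξ‖ ≤ δ * 1 := mul_le_mul ht.2 hξ.le (norm_nonneg _) hδ.le
        linarith
    _ ≤ _ := lintegral_mono_set (Set.Ioc_subset_Ioc_right hδ1)

lemma exps_le {K L a b : ℝ} (hK : 0 < K)
    (h : ∀ δ : ℝ, 0 < δ → δ ≤ 1 → K * δ ^ a ≤ L * δ ^ b) : b ≤ a := by
  by_contra! hab
  have h1 : Filter.Tendsto (fun δ : ℝ => L * δ ^ (b - a)) (nhdsWithin 0 (Set.Ioi 0)) (nhds 0) := by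
    have : Filter.Tendsto (fun δ : ℝ => L * δ ^ (b - a)) (nhds 0) (nhds (L * 0 ^ (b - a))) :=
      ((Real.continuousAt_rpow_const 0 (b - a) (Or.inr (by linarith))).tendsto).const_mul L
    rw [Real.zero_rpow (by linarith), mul_zero] at this
    exact this.mono_left nhdsWithin_le_nhds
  have h2 : K ≤ 0 := by
    refine ge_of_tendsto h1 ?_
    filter_upwards [Ioc_mem_nhdsGT (zero_lt_one' ℝ)] with δ hδ
    have h3 := h δ hδ.1 hδ.2
    rw [Real.rpow_sub hδ.1, ← mul_div_assoc, le_div_iff₀ (Real.rpow_pos_of_pos hδ.1 _)]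
    exact h3
  linarith

/-- Necessary condition for the Nikodym-order mixed norm bound:
`1 + (d-1)/q ≥ d/p`. -/
theorem statement7 (d : ℕ) (hd : 2 ≤ d) (p q r : ℝ)
    (hp : 1 ≤ p) (hq : 1 ≤ q) (hr : 1 ≤ r) (C : ℝ) (hC : 1 ≤ C) (A : ℝ) (hA : 0 < A)
    (hbound : ∀ f : Euc (d - 1) × ℝ → ℝ≥0∞, Measurable f →
      nikodymMixedNorm q r C f ≤ ENNReal.ofReal A * lpNorm p f) :
    1 + ((d:ℝ) - 1) / q ≥ (d:ℝ) / p := by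
  obtain ⟨n, rfl⟩ : ∃ n, d = n + 1 := ⟨d - 1, by omega⟩
  replace hbound : ∀ f : Euc n × ℝ → ℝ≥0∞, Measurable f →
      nikodymMixedNorm q r C f ≤ ENNReal.ofReal A * lpNorm p f := hbound
  have hp0 : 0 < p := by linarith
  have hq0 : 0 < q := by linarith
  have hr0 : 0 < r := by linarith
  obtain ⟨v, hv, hV⟩ : ∃ v : ℝ, 0 < v ∧ volume (Metric.ball (0 : Euc n) 1) = ENNReal.ofReal v :=
    ⟨(volume (Metric.ball (0 : Euc n) 1)).toReal,
      ENNReal.toReal_pos (Metric.measure_ball_pos volume _ one_pos).ne' measure_ball_lt_top.ne,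
      (ENNReal.ofReal_toReal measure_ball_lt_top.ne).symm⟩
  have hball : ∀ s : ℝ, 0 < s → volume (Metric.ball (0 : Euc n) s) = ENNReal.ofReal (s ^ n * v) := by
    intro s hs
    rw [Measure.addHaar_ball_of_pos _ _ hs, hV, finrank_euclideanSpace_fin,
      ENNReal.ofReal_mul (by positivity)]
  have key : ∀ δ : ℝ, 0 < δ → δ ≤ 1 →
      v ^ (1/r) * v ^ (1/q) * δ ^ (1 + (n:ℝ)/q) ≤ A * (2 ^ n * v) ^ (1/p) * δ ^ (((n:ℝ)+1)/p) := by
    intro δ hδ hδ1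
    have hmeas : MeasurableSet (Metric.ball (0 : Euc n) (2*δ) ×ˢ Set.Ioc (0:ℝ) δ) :=
      measurableSet_ball.prod measurableSet_Ioc
    have h := hbound (Set.indicator (Metric.ball (0 : Euc n) (2*δ) ×ˢ Set.Ioc 0 δ)
      (fun _ => (1 : ℝ≥0∞))) (measurable_const.indicator hmeas)
    have hR : lpNorm p (Set.indicator (Metric.ball (0 : Euc n) (2*δ) ×ˢ Set.Ioc 0 δ)
        (fun _ => (1 : ℝ≥0∞))) = ENNReal.ofReal (((2*δ)^n * v * δ) ^ (1/p)) := by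
      unfold _root_.lpNorm
      have : ∀ z, (Set.indicator (Metric.ball (0 : Euc n) (2*δ) ×ˢ Set.Ioc 0 δ)
        (fun _ => (1 : ℝ≥0∞)) z) ^ p = Set.indicator (Metric.ball (0 : Euc n) (2*δ) ×ˢ Set.Ioc 0 δ)
        (fun _ => (1 : ℝ≥0∞)) z := by
        intro z
        by_cases hz : z ∈ (Metric.ball (0 : Euc n) (2*δ) ×ˢ Set.Ioc (0:ℝ) δ)
        · simp only [Set.indicator_of_mem hz, ENNReal.one_rpow]
        · simp only [Set.indicator_of_notMem hz, ENNReal.zero_rpow_of_pos hp0]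
      simp_rw [this]
      rw [lintegral_indicator_const hmeas, one_mul, Measure.volume_eq_prod, Measure.prod_prod,
        hball _ (by positivity), Real.volume_Ioc, sub_zero, ← ENNReal.ofReal_mul (by positivity),
        ENNReal.ofReal_rpow_of_nonneg (by positivity) (by positivity)]
    have hL : ENNReal.ofReal (((δ ^ r * v) ^ (q/r) * (δ^n * v)) ^ (1/q)) ≤
        nikodymMixedNorm q r C (Set.indicator (Metric.ball (0 : Euc n) (2*δ) ×ˢ Set.Ioc 0 δ)
        (fun _ => (1 : ℝ≥0∞))) := by
      unfold nikodymMixedNorm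
      rw [← ENNReal.ofReal_rpow_of_nonneg (by positivity) (by positivity)]
      refine ENNReal.rpow_le_rpow ?_ (by positivity)
      rw [ENNReal.ofReal_mul (by positivity), ← hball δ hδ, ← setLIntegral_const]
      refine le_trans ?_ (setLIntegral_le_lintegral (Metric.ball (0 : Euc n) δ) _)
      refine setLIntegral_mono' measurableSet_ball fun x hx => ?_
      rw [← ENNReal.ofReal_rpow_of_nonneg (by positivity) (by positivity)]
      refine ENNReal.rpow_le_rpow ?_ (by positivity)
      rw [ENNReal.ofReal_mul (by positivity), ← hV, ← setLIntegral_const]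
      refine le_trans ?_ (lintegral_mono_set (Metric.ball_subset_ball hC))
      refine setLIntegral_mono' measurableSet_ball fun ξ hξ => ?_
      rw [← ENNReal.ofReal_rpow_of_nonneg (by positivity) (by positivity)]
      exact ENNReal.rpow_le_rpow (xray_ge δ hδ hδ1 ξ x hξ hx) (by positivity)
    have h2 := hL.trans h
    rw [hR, ← ENNReal.ofReal_mul hA.le, ENNReal.ofReal_le_ofReal_iff (by positivity)] at h2
    have e1 : ((δ ^ r * v) ^ (q/r) * (δ^n * v)) ^ (1/q)
        = v ^ (1/r) * v ^ (1/q) * δ ^ (1 + (n:ℝ)/q) := by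
      rw [Real.mul_rpow (by positivity) (by positivity), Real.mul_rpow (by positivity) hv.le,
        Real.mul_rpow (by positivity) (by positivity), Real.mul_rpow (by positivity) hv.le,
        Real.rpow_add hδ, ← Real.rpow_natCast, ← Real.rpow_mul hδ.le, ← Real.rpow_mul hδ.le,
        ← Real.rpow_mul hδ.le, ← Real.rpow_mul hv.le]
      have a1 : r * (q / r) * (1 / q) = 1 := by field_simp
      have a2 : q / r * (1 / q) = 1 / r := by field_simp
      have a3 : (n:ℝ) * (1 / q) = n / q := by field_simp
      rw [a1, a2, a3]; ring
    have e2 : ((2*δ)^n * v * δ) ^ (1/p) = (2 ^ n * v) ^ (1/p) * δ ^ (((n:ℝ)+1)/p) := by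
      have : (2*δ)^n * v * δ = (2 ^ n * v) * δ ^ ((n:ℝ)+1) := by
        rw [Real.rpow_add hδ, Real.rpow_natCast, Real.rpow_one]; ring
      rw [this, Real.mul_rpow (by positivity) (by positivity), ← Real.rpow_mul hδ.le]
      congr 2; ring
    rw [e1, e2] at h2
    linarith
  have := exps_le (by positivity) key
  push_cast
  simpa using this

end
end

section
/- Let d ≥ 2 be an integer, let C > 0, and let 1 ≤ p ≤ q < r < ∞. Suppose there is a constant c > 0 such that for every measurable E ⊆ Q, every λ ∈ (0,1], and every measurable F ⊆ B(0,C) × ℝ^{d−1} with T[χ_E](ξ,x) ≥ λ for all (ξ,x) ∈ F, one has ℒ^d(E)^{1/p} ≥ c λ ℒ^{2(d−1)}(F)^{1/q} m(F)^{1/r − 1/q}. Then for every ε > 0 there is a constant A > 0 such that ‖T[f]‖_{L^q(L^r),K} ≤ A ‖f‖_{L^{p+ε}(ℝ^d)} for every nonnegative measurable function f supported on Q. -/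
open MeasureTheory ENNReal

noncomputable section

/-- The Kakeya-order mixed norm `‖T[f]‖_{L^q(L^r),K}`. -/
def kakeyaMixedNorm {n : ℕ} (q r C : ℝ) (f : Euc n × ℝ → ℝ≥0∞) : ℝ≥0∞ :=
  (∫⁻ ξ in Metric.ball (0 : Euc n) C, (∫⁻ x, xrayT f ξ x ^ r) ^ (q / r)) ^ (1 / q)

/-- The closed unit cube `Q` centered at `(1/2) e_d` with side length `1`. -/
def Qcube (n : ℕ) : Set (Euc n × ℝ) :=
  {z | (∀ i, z.1 i ∈ Set.Icc (-(1:ℝ)/2) (1/2)) ∧ z.2 ∈ Set.Icc (0:ℝ) 1}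

/-- `m(F) = sup_ξ ℒ^{d-1}({x : (ξ,x) ∈ F})`. -/
def mF {n : ℕ} (F : Set (Euc n × Euc n)) : ℝ≥0∞ :=
  ⨆ ξ : Euc n, volume {x : Euc n | (ξ, x) ∈ F}

lemma Lp_tsum {α : Type*} [MeasurableSpace α] (μ : Measure α) {r : ℝ} (hr : 1 ≤ r)
    (h : ℕ → α → ℝ≥0∞) (hm : ∀ n, Measurable (h n)) :
    (∫⁻ x, (∑' n, h n x) ^ r ∂μ) ^ (1 / r) ≤ ∑' n, (∫⁻ x, h n x ^ r ∂μ) ^ (1 / r) := by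
  have hr0 : 0 < r := by linarith
  have fin : ∀ N : ℕ, (∫⁻ x, (∑ n ∈ Finset.range N, h n x) ^ r ∂μ) ^ (1 / r)
      ≤ ∑ n ∈ Finset.range N, (∫⁻ x, h n x ^ r ∂μ) ^ (1 / r) := by
    intro N
    induction N with
    | zero => simp [hr0]
    | succ N ih =>
      simp only [Finset.sum_range_succ]
      refine le_trans ?_ (add_le_add_left ih _)
      exact ENNReal.lintegral_Lp_add_le
        (f := fun x => ∑ n ∈ Finset.range N, h n x) (g := h N)
        (Finset.measurable_fun_sum _ (fun i _ => hm i)).aemeasurable (hm N).aemeasurable hr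
  have hmono : ∀ x, Monotone fun N : ℕ => ∑ n ∈ Finset.range N, h n x := fun x a b hab =>
    Finset.sum_le_sum_of_subset (Finset.range_mono hab)
  have e1 : ∀ x, (∑' n, h n x) ^ r = ⨆ N : ℕ, (∑ n ∈ Finset.range N, h n x) ^ r := by
    intro x
    rw [ENNReal.tsum_eq_iSup_nat]
    exact (ENNReal.orderIsoRpow r hr0).map_iSup _
  simp only [e1]
  rw [lintegral_iSup]
  · have : (⨆ N : ℕ, ∫⁻ x, (∑ n ∈ Finset.range N, h n x) ^ r ∂μ) ^ (1 / r)
        = ⨆ N : ℕ, (∫⁻ x, (∑ n ∈ Finset.range N, h n x) ^ r ∂μ) ^ (1 / r) :=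
      (ENNReal.orderIsoRpow (1 / r) (by positivity)).map_iSup _
    rw [this]
    exact iSup_le fun N => (fin N).trans (ENNReal.sum_le_tsum _)
  · intro n
    exact (Finset.measurable_fun_sum _ (fun i _ => hm i)).pow_const r
  · intro a b hab x
    exact ENNReal.rpow_le_rpow (hmono x hab) hr0.le

/-- Mixed norm of a general function. -/
def MN {n : ℕ} (q r C : ℝ) (h : Euc n → Euc n → ℝ≥0∞) : ℝ≥0∞ :=
  (∫⁻ ξ in Metric.ball (0 : Euc n) C, (∫⁻ x, h ξ x ^ r) ^ (q / r)) ^ (1 / q)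

lemma MN_tsum {n : ℕ} {q r C : ℝ} (hq : 1 ≤ q) (hr : 1 ≤ r)
    (h : ℕ → Euc n → Euc n → ℝ≥0∞) (hm : ∀ k, Measurable (Function.uncurry (h k))) :
    MN q r C (fun ξ x => ∑' k, h k ξ x) ≤ ∑' k, MN q r C (h k) := by
  have hq0 : 0 < q := by linarith
  have hr0 : 0 < r := by linarith
  have e : ∀ a : ℝ≥0∞, a ^ (q / r) = (a ^ (1 / r)) ^ q := by
    intro a
    rw [← ENNReal.rpow_mul]; congr 1; ring
  unfold MN
  simp only [e]
  have := Lp_tsum (volume.restrict (Metric.ball (0 : Euc n) C)) hq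
    (fun k ξ => (∫⁻ x, h k ξ x ^ r) ^ (1 / r))
    (fun k => (Measurable.lintegral_prod_right ((hm k).pow_const r)).pow_const _)
  refine le_trans ?_ this
  gcongr with ξ
  exact Lp_tsum volume hr (fun k => h k ξ) (fun k => (hm k).comp measurable_prodMk_left)

lemma MN_const_mul {n : ℕ} {q r C : ℝ} (hq : 1 ≤ q) (hr : 1 ≤ r) (a : ℝ≥0∞)
    (h : Euc n → Euc n → ℝ≥0∞) (hm : Measurable (Function.uncurry h)) :
    MN q r C (fun ξ x => a * h ξ x) = a * MN q r C h := by
  have hq0 : 0 < q := by linarith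
  have hr0 : 0 < r := by linarith
  unfold MN
  simp only [ENNReal.mul_rpow_of_nonneg _ _ hr0.le]
  have h1 : ∀ ξ, ∫⁻ x, a ^ r * h ξ x ^ r = a ^ r * ∫⁻ x, h ξ x ^ r := fun ξ =>
    lintegral_const_mul _ ((hm.comp measurable_prodMk_left).pow_const r)
  simp only [h1]
  simp only [ENNReal.mul_rpow_of_nonneg _ _ (show 0 ≤ q / r by positivity)]
  rw [lintegral_const_mul _
    ((Measurable.lintegral_prod_right (hm.pow_const r)).pow_const _),
    ENNReal.mul_rpow_of_nonneg _ _ (show 0 ≤ 1 / q by positivity), ← ENNReal.rpow_mul,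
    ← ENNReal.rpow_mul]
  congr 1
  rw [show r * (q / r * (1 / q)) = 1 by field_simp, ENNReal.rpow_one]

lemma MN_mono {n : ℕ} {q r C : ℝ} (hq : 1 ≤ q) (hr : 1 ≤ r)
    (h g : Euc n → Euc n → ℝ≥0∞)
    (hg : ∀ ξ ∈ Metric.ball (0 : Euc n) C, ∀ᵐ x, h ξ x ≤ g ξ x) :
    MN q r C h ≤ MN q r C g := by
  have hq0 : 0 < q := by linarith
  have hr0 : 0 < r := by linarith
  unfold MN
  refine ENNReal.rpow_le_rpow ?_ (by positivity)
  refine setLIntegral_mono' measurableSet_ball ?_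
  intro ξ hξ
  refine ENNReal.rpow_le_rpow ?_ (by positivity)
  refine lintegral_mono_ae ?_
  filter_upwards [hg ξ hξ] with x hx
  exact ENNReal.rpow_le_rpow hx hr0.le

lemma xrayT_meas {n : ℕ} {f : Euc n × ℝ → ℝ≥0∞} (hf : Measurable f) :
    Measurable (Function.uncurry (xrayT f)) := by
  have : Measurable (Function.uncurry fun (w : Euc n × Euc n) (t : ℝ) =>
      f (w.2 + t • w.1, t)) := by
    refine hf.comp ?_
    have : Continuous fun (u : (Euc n × Euc n) × ℝ) => (u.1.2 + u.2 • u.1.1, u.2) := by fun_prop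
    exact this.measurable
  exact Measurable.lintegral_prod_right this

lemma xrayT_tsum {n : ℕ} (f : ℕ → Euc n × ℝ → ℝ≥0∞) (hf : ∀ k, Measurable (f k)) (ξ x : Euc n) :
    xrayT (fun z => ∑' k, f k z) ξ x = ∑' k, xrayT (f k) ξ x := by
  unfold xrayT
  refine lintegral_tsum fun k => Measurable.aemeasurable ?_
  refine (hf k).comp ?_
  have : Continuous fun (t : ℝ) => (x + t • ξ, t) := by fun_prop
  exact this.measurable

lemma xrayT_const_mul {n : ℕ} (a : ℝ≥0∞) (f : Euc n × ℝ → ℝ≥0∞) (hf : Measurable f)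
    (ξ x : Euc n) :
    xrayT (fun z => a * f z) ξ x = a * xrayT f ξ x := by
  unfold xrayT
  refine lintegral_const_mul _ ?_
  refine hf.comp ?_
  have : Continuous fun (t : ℝ) => (x + t • ξ, t) := by fun_prop
  exact this.measurable

lemma xrayT_mono {n : ℕ} {f g : Euc n × ℝ → ℝ≥0∞} (h : ∀ z, f z ≤ g z) (ξ x : Euc n) :
    xrayT f ξ x ≤ xrayT g ξ x := lintegral_mono fun _ => h _

lemma xrayT_ind_le {n : ℕ} (E : Set (Euc n × ℝ)) (ξ x : Euc n) :
    xrayT (E.indicator fun _ => (1:ℝ≥0∞)) ξ x ≤ 1 := by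
  unfold xrayT
  calc _ ≤ ∫⁻ t in Set.Ioc (0:ℝ) 1, 1 :=
        lintegral_mono fun t => by
          by_cases h : (x + t • ξ, t) ∈ E <;> simp [h]
    _ = 1 := by simp

lemma Qcube_meas (n : ℕ) : MeasurableSet (Qcube n) := by
  have : IsClosed (Qcube n) := by
    have : Qcube n = (⋂ i, {z : Euc n × ℝ | z.1 i ∈ Set.Icc (-(1:ℝ)/2) (1/2)}) ∩
        {z | z.2 ∈ Set.Icc (0:ℝ) 1} := by
      ext z; simp [Qcube]
    rw [this]
    refine (isClosed_iInter fun i => ?_).inter ?_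
    · exact isClosed_Icc.preimage (by fun_prop)
    · exact isClosed_Icc.preimage (by fun_prop)
  exact this.measurableSet

lemma Qcube_norm {n : ℕ} {z : Euc n × ℝ} (hz : z ∈ Qcube n) : ‖z.1‖ ≤ n := by
  have h1 : ‖z.1‖ ≤ ∑ i, ‖z.1 i‖ := by
    rw [EuclideanSpace.norm_eq]
    refine Real.sqrt_le_iff.2 ⟨by positivity, ?_⟩
    exact Finset.sum_sq_le_sq_sum_of_nonneg (fun i _ => norm_nonneg _)
  refine h1.trans ?_
  calc _ ≤ ∑ i : Fin n, (1:ℝ) := by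
        refine Finset.sum_le_sum fun i _ => ?_
        have := hz.1 i
        rw [Real.norm_eq_abs, abs_le]
        constructor <;> linarith [this.1, this.2]
    _ = n := by simp

lemma Qcube_vol (n : ℕ) : volume (Qcube n) < ∞ := by
  have : Qcube n ⊆ Metric.closedBall (0 : Euc n) n ×ˢ Set.Icc (0:ℝ) 1 := fun z hz =>
    ⟨by simpa using Qcube_norm hz, hz.2⟩
  refine (measure_mono this).trans_lt ?_
  exact ((isCompact_closedBall _ _).prod isCompact_Icc).measure_lt_top

lemma xrayT_supp {n : ℕ} {C : ℝ} {E : Set (Euc n × ℝ)} (hE : E ⊆ Qcube n) {ξ x : Euc n}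
    (hξ : ξ ∈ Metric.ball (0 : Euc n) C)
    (h : xrayT (E.indicator fun _ => (1:ℝ≥0∞)) ξ x ≠ 0) :
    x ∈ Metric.closedBall (0 : Euc n) (n + C) := by
  by_contra hx
  apply h
  unfold xrayT
  rw [setLIntegral_congr_fun (g := fun _ => 0) measurableSet_Ioc]
  · simp
  · intro t ht
    refine Set.indicator_of_notMem (fun hz => hx ?_) _
    have h1 := Qcube_norm (hE hz)
    simp only at h1
    have h2 : ‖t • ξ‖ ≤ C := by
      rw [norm_smul, Real.norm_eq_abs, abs_of_pos ht.1]
      have : ‖ξ‖ < C := by simpa using hξ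
      nlinarith [ht.1, ht.2, norm_nonneg ξ]
    have h3 : ‖x‖ ≤ ‖x + t • ξ‖ + ‖t • ξ‖ := by
      simpa using norm_sub_le (x + t • ξ) (t • ξ)
    simp only [mem_closedBall_zero_iff]
    linarith

lemma layer {y M : ℝ≥0∞} (hy : y ≠ 0) (hyM : y ≤ M) (hM : M ≠ ∞) :
    ∃ l : ℕ, M * 2⁻¹ ^ (l + 1) < y ∧ y ≤ M * 2⁻¹ ^ l := by
  have ht : Filter.Tendsto (fun l : ℕ => M * (2⁻¹ : ℝ≥0∞) ^ l) Filter.atTop (nhds (M * 0)) :=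
    ENNReal.Tendsto.const_mul
      (ENNReal.tendsto_pow_atTop_nhds_zero_of_lt_one (by simp)) (Or.inr hM)
  rw [mul_zero] at ht
  have hex : ∃ l : ℕ, M * (2⁻¹ : ℝ≥0∞) ^ (l + 1) < y := by
    have := (ht.comp (Filter.tendsto_add_atTop_nat 1)).eventually
      (gt_mem_nhds (pos_iff_ne_zero.2 hy))
    exact this.exists
  classical
  refine ⟨Nat.find hex, Nat.find_spec hex, ?_⟩
  rcases h : Nat.find hex with _ | k
  · simpa using hyM
  · have := Nat.find_min hex (m := k) (by omega)
    exact not_lt.1 this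

lemma interp {a X Y : ℝ≥0∞} {θ : ℝ} (h0 : 0 ≤ θ) (h1 : θ ≤ 1) (hX : a ≤ X) (hY : a ≤ Y) :
    a ≤ X ^ θ * Y ^ (1 - θ) := by
  calc a = a ^ (θ + (1 - θ)) := by simp
    _ = a ^ θ * a ^ (1 - θ) := ENNReal.rpow_add_of_nonneg _ _ h0 (by linarith)
    _ ≤ _ := mul_le_mul' (ENNReal.rpow_le_rpow hX h0) (ENNReal.rpow_le_rpow hY (by linarith))

lemma MN_ind {n : ℕ} {q r C : ℝ} (hr : 1 ≤ r) {F : Set (Euc n × Euc n)}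
    (hF : MeasurableSet F) :
    MN q r C (fun ξ x => F.indicator (fun _ => (1:ℝ≥0∞)) (ξ, x)) =
      (∫⁻ ξ in Metric.ball (0 : Euc n) C, (volume {x : Euc n | (ξ, x) ∈ F}) ^ (q / r)) ^ (1 / q) := by
  have hr0 : 0 < r := by linarith
  unfold MN
  congr 2
  ext ξ
  congr 1
  have hs : MeasurableSet {x : Euc n | (ξ, x) ∈ F} := measurable_prodMk_left hF
  rw [← lintegral_indicator_one hs]
  congr 1
  ext x
  by_cases h : (ξ, x) ∈ F <;> simp [h, hr0]

lemma MN_ind_le1 {n : ℕ} {q r C : ℝ} (hq : 1 ≤ q) (hr : 1 ≤ r) {F : Set (Euc n × Euc n)}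
    (hF : MeasurableSet F) (s : ℝ≥0∞) (hs : ∀ ξ, volume {x : Euc n | (ξ, x) ∈ F} ≤ s) :
    MN q r C (fun ξ x => F.indicator (fun _ => (1:ℝ≥0∞)) (ξ, x)) ≤
      s ^ (1 / r) * volume (Metric.ball (0 : Euc n) C) ^ (1 / q) := by
  have hr0 : 0 < r := by linarith
  have hq0 : 0 < q := by linarith
  rw [MN_ind hr hF]
  calc _ ≤ (∫⁻ ξ in Metric.ball (0 : Euc n) C, s ^ (q / r)) ^ (1 / q) := by
        gcongr with ξ
        exact hs ξ
    _ = _ := by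
        rw [setLIntegral_const, ENNReal.mul_rpow_of_nonneg _ _ (by positivity),
          ← ENNReal.rpow_mul]
        congr 2
        field_simp

lemma MN_ind_le2 {n : ℕ} {q r C : ℝ} (hq : 1 ≤ q) (hqr : q < r) {F : Set (Euc n × Euc n)}
    (hF : MeasurableSet F) (t : ℝ≥0∞) (ht0 : t ≠ 0) (htt : t ≠ ∞)
    (hs : ∀ ξ, volume {x : Euc n | (ξ, x) ∈ F} ≤ 2 * t)
    (ht : ∀ ξ, volume {x : Euc n | (ξ, x) ∈ F} = 0 ∨ t ≤ volume {x : Euc n | (ξ, x) ∈ F}) :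
    MN q r C (fun ξ x => F.indicator (fun _ => (1:ℝ≥0∞)) (ξ, x)) ≤
      2 ^ (1 / q - 1 / r) * (volume F ^ (1 / q) * mF F ^ (1 / r - 1 / q)) := by
  have hq0 : 0 < q := by linarith
  have hr0 : 0 < r := by linarith
  have hm : mF F ≤ 2 * t := iSup_le hs
  have he : 1 / r - 1 / q ≤ 0 := by
    have := one_div_le_one_div_of_le hq0 hqr.le
    linarith
  have anti : ∀ {a b : ℝ≥0∞} {e : ℝ}, e ≤ 0 → a ≤ b → b ^ e ≤ a ^ e := by
    intro a b e he hab
    have : e = -(-e) := by ring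
    rw [this, ENNReal.rpow_neg b (-e), ENNReal.rpow_neg a (-e), ENNReal.inv_le_inv]
    exact ENNReal.rpow_le_rpow hab (by linarith)
  have hE : t ^ (1 / r - 1 / q) ≤ 2 ^ (1 / q - 1 / r) * mF F ^ (1 / r - 1 / q) := by
    calc t ^ (1 / r - 1 / q) = 2 ^ (1 / q - 1 / r) * (2 * t) ^ (1 / r - 1 / q) := by
          rw [ENNReal.mul_rpow_of_ne_top (by simp) htt, ← mul_assoc,
            ← ENNReal.rpow_add _ _ (by simp) (by simp)]
          simp
      _ ≤ _ := mul_le_mul' le_rfl (anti he hm)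
  have hqr' : q / r - 1 ≤ 0 := by
    have : q / r ≤ 1 := (div_le_one hr0).2 hqr.le
    linarith
  have hpt : ∀ ξ, volume {x : Euc n | (ξ, x) ∈ F} ^ (q / r) ≤
      t ^ (q / r - 1) * volume {x : Euc n | (ξ, x) ∈ F} := by
    intro ξ
    rcases ht ξ with h | h
    · rw [h, ENNReal.zero_rpow_of_pos (by positivity)]; exact zero_le
    · set v := volume {x : Euc n | (ξ, x) ∈ F}
      have hv0 : v ≠ 0 := fun h0 => ht0 (by simpa [h0] using h)
      have hvt : v ≠ ∞ := ((hs ξ).trans_lt (ENNReal.mul_lt_top (by simp) htt.lt_top)).ne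
      calc v ^ (q / r) = v ^ (q / r - 1 + 1) := by ring_nf
        _ = v ^ (q / r - 1) * v := by rw [ENNReal.rpow_add _ _ hv0 hvt, ENNReal.rpow_one]
        _ ≤ _ := by gcongr ?_ * _; exact anti hqr' h
  rw [MN_ind (by linarith) hF]
  have hmv : Measurable fun ξ => volume {x : Euc n | (ξ, x) ∈ F} :=
    measurable_measure_prodMk_left hF
  calc _ ≤ (t ^ (q / r - 1) * volume F) ^ (1 / q) := by
        refine ENNReal.rpow_le_rpow ?_ (by positivity)
        calc _ ≤ ∫⁻ ξ, t ^ (q / r - 1) * volume {x : Euc n | (ξ, x) ∈ F} :=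
              (lintegral_mono hpt).trans (setLIntegral_le_lintegral _ _)
          _ = t ^ (q / r - 1) * volume F := by
              rw [lintegral_const_mul _ hmv, Measure.volume_eq_prod, Measure.prod_apply hF]
              rfl
    _ = t ^ (1 / r - 1 / q) * volume F ^ (1 / q) := by
        rw [ENNReal.mul_rpow_of_nonneg _ _ (by positivity), ← ENNReal.rpow_mul]
        congr 2
        field_simp
    _ ≤ (2 ^ (1 / q - 1 / r) * mF F ^ (1 / r - 1 / q)) * volume F ^ (1 / q) := by gcongr
    _ = _ := by ring

lemma half_rpow_tsum {θ : ℝ} (hθ : 0 < θ) : ∑' i : ℕ, ((2⁻¹ : ℝ≥0∞) ^ i) ^ θ ≠ ∞ := by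
  have : ∀ i : ℕ, ((2⁻¹ : ℝ≥0∞) ^ i) ^ θ = ((2⁻¹ : ℝ≥0∞) ^ θ) ^ i := by
    intro i
    rw [← ENNReal.rpow_natCast, ← ENNReal.rpow_natCast, ← ENNReal.rpow_mul, ← ENNReal.rpow_mul,
      mul_comm]
  simp only [this, ENNReal.tsum_geometric]
  rw [ne_eq, ENNReal.inv_eq_top, tsub_eq_zero_iff_le, not_le]
  exact ENNReal.rpow_lt_one (by simp) hθ

lemma char_bound (n : ℕ) (C : ℝ) (p q r : ℝ)
    (hp : 1 ≤ p) (hpq : p ≤ q) (hqr : q < r) (c : ℝ) (hc : 0 < c)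
    (hweak : ∀ E : Set (Euc n × ℝ), E ⊆ Qcube n → MeasurableSet E →
      ∀ lam : ℝ, lam ∈ Set.Ioc (0:ℝ) 1 →
      ∀ F : Set (Euc n × Euc n),
        F ⊆ (Metric.ball (0 : Euc n) C) ×ˢ (Set.univ : Set (Euc n)) →
        MeasurableSet F →
        (∀ w ∈ F, ENNReal.ofReal lam ≤ xrayT (E.indicator fun _ => (1:ℝ≥0∞)) w.1 w.2) →
        ENNReal.ofReal (c * lam) * (volume F) ^ (1/q) * (mF F) ^ (1/r - 1/q)
          ≤ (volume E) ^ (1/p))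
    (θ : ℝ) (hθ0 : 0 < θ) (hθ1 : θ < 1) :
    ∃ A : ℝ≥0∞, A ≠ ∞ ∧ ∀ E : Set (Euc n × ℝ), E ⊆ Qcube n → MeasurableSet E →
      MN q r C (xrayT (E.indicator fun _ => (1:ℝ≥0∞))) ≤ A * volume E ^ ((1 - θ) / p) := by
  have hq1 : 1 ≤ q := by linarith
  have hr1 : 1 ≤ r := by linarith
  have hr0 : 0 < r := by linarith
  have hp0 : 0 < p := by linarith
  set M : ℝ≥0∞ := volume (Metric.closedBall (0 : Euc n) (n + C)) + 1 with hMdef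
  have hMt : M ≠ ∞ := by
    have := (isCompact_closedBall (0 : Euc n) (n + C)).measure_lt_top (μ := volume)
    simp [hMdef, this.ne]
  have hM0 : M ≠ 0 := by simp [hMdef]
  set B := volume (Metric.ball (0 : Euc n) C) with hB
  have hBt : B ≠ ∞ := measure_ball_lt_top.ne
  set κ : ℝ≥0∞ := 2 ^ (1 / q - 1 / r) * ENNReal.ofReal (2 / c) with hκ
  have hκt : κ ≠ ∞ := by
    refine ENNReal.mul_ne_top (ENNReal.rpow_ne_top_of_ne_zero (by simp) (by simp)) (by simp)
  set K : ℝ≥0∞ := (M ^ (1 / r) * B ^ (1 / q)) ^ θ * κ ^ (1 - θ) with hK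
  have hKt : K ≠ ∞ := by
    have h1q : 0 ≤ 1 / q := by positivity
    have h1r : 0 ≤ 1 / r := by positivity
    have h1θ : 0 ≤ 1 - θ := by linarith
    refine ENNReal.mul_ne_top (ENNReal.rpow_ne_top_of_nonneg hθ0.le
      (ENNReal.mul_ne_top ?_ ?_)) (ENNReal.rpow_ne_top_of_nonneg h1θ hκt)
    · exact ENNReal.rpow_ne_top_of_nonneg h1r hMt
    · exact ENNReal.rpow_ne_top_of_nonneg h1q hBt
  refine ⟨(∑' i : ℕ, ((2⁻¹ : ℝ≥0∞) ^ i) ^ θ) * ((∑' l : ℕ, ((2⁻¹ : ℝ≥0∞) ^ l) ^ (1 / r * θ)) * K),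
    ENNReal.mul_ne_top (half_rpow_tsum hθ0)
      (ENNReal.mul_ne_top (half_rpow_tsum (by positivity)) hKt), ?_⟩
  intro E hEQ hE
  set T := xrayT (E.indicator fun _ => (1:ℝ≥0∞)) with hT
  have hTm : Measurable (Function.uncurry T) := xrayT_meas (measurable_const.indicator hE)
  set S : ℕ → Set (Euc n × Euc n) := fun i => {w | (2⁻¹ : ℝ≥0∞) ^ (i + 1) ≤ T w.1 w.2} with hS
  have hSm : ∀ i, MeasurableSet (S i) := fun i => measurableSet_le measurable_const hTm
  set G : ℕ → Euc n → ℝ≥0∞ := fun i ξ => volume {x : Euc n | (ξ, x) ∈ S i} with hG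
  have hGm : ∀ i, Measurable (G i) := fun i => measurable_measure_prodMk_left (hSm i)
  set P : ℕ → ℕ → Set (Euc n) := fun i l =>
    Metric.ball 0 C ∩ {ξ | M * 2⁻¹ ^ (l + 1) < G i ξ ∧ G i ξ ≤ M * 2⁻¹ ^ l} with hP
  have hPm : ∀ i l, MeasurableSet (P i l) := fun i l =>
    measurableSet_ball.inter ((measurableSet_lt measurable_const (hGm i)).inter
      (measurableSet_le (hGm i) measurable_const))
  set F : ℕ → ℕ → Set (Euc n × Euc n) := fun i l => {w | w.1 ∈ P i l ∧ w ∈ S i} with hF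
  have hFm : ∀ i l, MeasurableSet (F i l) := fun i l =>
    (measurable_fst (hPm i l)).inter (hSm i)
  have hFG : ∀ i l ξ, ξ ∈ P i l → volume {x : Euc n | (ξ, x) ∈ F i l} = G i ξ := by
    intro i l ξ h
    simp [hF, hG, h]
  have hF0 : ∀ i l ξ, ξ ∉ P i l → volume {x : Euc n | (ξ, x) ∈ F i l} = 0 := by
    intro i l ξ h
    simp [hF, h]
  have h2 : ∀ l : ℕ, M * 2⁻¹ ^ l = 2 * (M * 2⁻¹ ^ (l + 1)) := by
    intro l
    rw [pow_succ]
    calc M * 2⁻¹ ^ l = M * 2⁻¹ ^ l * (2 * 2⁻¹) := by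
          rw [ENNReal.mul_inv_cancel (by simp) (by simp), mul_one]
      _ = _ := by ring
  have hFle : ∀ i l ξ, volume {x : Euc n | (ξ, x) ∈ F i l} ≤ M * 2⁻¹ ^ l := by
    intro i l ξ
    by_cases h : ξ ∈ P i l
    · rw [hFG i l ξ h]; exact h.2.2
    · rw [hF0 i l ξ h]; exact zero_le
  -- pointwise domination
  have hdom : ∀ ξ ∈ Metric.ball (0 : Euc n) C, ∀ᵐ x, T ξ x ≤
      ∑' i : ℕ, ∑' l : ℕ, 2⁻¹ ^ i * (F i l).indicator (fun _ => (1:ℝ≥0∞)) (ξ, x) := by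
    intro ξ hξ
    have hnull : ∀ᵐ x, ∀ i, G i ξ = 0 → (ξ, x) ∉ S i := by
      rw [ae_all_iff]
      intro i
      by_cases h : G i ξ = 0
      · have h' : volume {x : Euc n | (ξ, x) ∈ S i} = 0 := h
        filter_upwards [measure_eq_zero_iff_ae_notMem.1 h'] with x hx _ using hx
      · exact Filter.Eventually.of_forall fun x h' => absurd h' h
    filter_upwards [hnull] with x hx
    by_cases h0 : T ξ x = 0
    · rw [h0]; exact zero_le
    obtain ⟨i, hi1, hi2⟩ := layer h0 (xrayT_ind_le E ξ x) (by simp)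
    rw [one_mul] at hi1 hi2
    have hxS : (ξ, x) ∈ S i := hi1.le
    have hG0 : G i ξ ≠ 0 := fun h => hx i h hxS
    have hGM : G i ξ ≤ M := by
      refine le_trans (measure_mono ?_) le_self_add
      intro y hy
      refine xrayT_supp hEQ hξ ?_
      have hy' : (2⁻¹ : ℝ≥0∞) ^ (i + 1) ≤ T ξ y := hy
      intro h
      rw [← hT] at h
      rw [h] at hy'
      simp at hy'
    obtain ⟨l, hl1, hl2⟩ := layer hG0 hGM hMt
    have hxF : (ξ, x) ∈ F i l := ⟨⟨hξ, hl1, hl2⟩, hxS⟩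
    calc T ξ x ≤ 2⁻¹ ^ i := hi2
      _ = 2⁻¹ ^ i * (F i l).indicator (fun _ => (1:ℝ≥0∞)) (ξ, x) := by simp [hxF]
      _ ≤ ∑' l : ℕ, 2⁻¹ ^ i * (F i l).indicator (fun _ => (1:ℝ≥0∞)) (ξ, x) :=
          ENNReal.le_tsum l
      _ ≤ _ := ENNReal.le_tsum
        (f := fun i => ∑' l : ℕ, 2⁻¹ ^ i * (F i l).indicator (fun _ => (1:ℝ≥0∞)) (ξ, x)) i
  have hIm : ∀ i l, Measurable ((F i l).indicator (fun _ => (1:ℝ≥0∞))) := fun i l =>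
    measurable_const.indicator (hFm i l)
  have hterm : ∀ i l : ℕ,
      2⁻¹ ^ i * MN q r C (fun ξ x => (F i l).indicator (fun _ => (1:ℝ≥0∞)) (ξ, x)) ≤
      ((2⁻¹ : ℝ≥0∞) ^ i) ^ θ * (((2⁻¹ : ℝ≥0∞) ^ l) ^ (1 / r * θ) *
        (K * volume E ^ ((1 - θ) / p))) := by
    intro i l
    have b1 := MN_ind_le1 (C := C) hq1 hr1 (hFm i l) _ (hFle i l)
    have ht0 : M * 2⁻¹ ^ (l + 1) ≠ 0 := mul_ne_zero hM0 (by simp)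
    have htt : M * 2⁻¹ ^ (l + 1) ≠ ∞ := ENNReal.mul_ne_top hMt (by simp)
    have b2 := MN_ind_le2 (C := C) hq1 hqr (hFm i l) _ ht0 htt
      (fun ξ => (h2 l) ▸ hFle i l ξ) (by
        intro ξ
        by_cases h : ξ ∈ P i l
        · right; rw [hFG i l ξ h]; exact h.2.1.le
        · left; exact hF0 i l ξ h)
    have hlam : ENNReal.ofReal ((1/2) ^ (i + 1)) = 2⁻¹ ^ (i + 1) := by
      rw [ENNReal.ofReal_pow (by norm_num), one_div, ENNReal.ofReal_inv_of_pos (by norm_num)]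
      simp
    have b3 := hweak E hEQ hE ((1/2) ^ (i + 1))
      ⟨by positivity, pow_le_one₀ (by norm_num) (by norm_num)⟩ (F i l)
      (fun w hw => ⟨hw.1.1, trivial⟩) (hFm i l) (fun w hw => by rw [hlam]; exact hw.2)
    have hw : (2⁻¹ : ℝ≥0∞) ^ i = ENNReal.ofReal (2 / c) *
        ENNReal.ofReal (c * (1/2) ^ (i + 1)) := by
      rw [← ENNReal.ofReal_mul (by positivity),
        show 2 / c * (c * (1/2) ^ (i + 1)) = (2⁻¹ : ℝ) ^ i by field_simp; ring,
        ENNReal.ofReal_pow (by norm_num), ENNReal.ofReal_inv_of_pos (by norm_num)]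
      simp
    set m := MN q r C (fun ξ x => (F i l).indicator (fun _ => (1:ℝ≥0∞)) (ξ, x))
    have c2 : 2⁻¹ ^ i * m ≤ κ * volume E ^ (1 / p) := by
      calc 2⁻¹ ^ i * m ≤ 2⁻¹ ^ i * (2 ^ (1 / q - 1 / r) *
            (volume (F i l) ^ (1 / q) * mF (F i l) ^ (1 / r - 1 / q))) := by gcongr
        _ = κ * (ENNReal.ofReal (c * (1/2) ^ (i + 1)) * volume (F i l) ^ (1 / q) *
              mF (F i l) ^ (1 / r - 1 / q)) := by rw [hw, hκ]; ring
        _ ≤ _ := by gcongr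
    have c1 : 2⁻¹ ^ i * m ≤ 2⁻¹ ^ i * ((M * 2⁻¹ ^ l) ^ (1 / r) * B ^ (1 / q)) := by gcongr
    refine (interp hθ0.le hθ1.le c1 c2).trans (le_of_eq ?_)
    have h1r : 0 ≤ 1 / r := by positivity
    have h1θ : 0 ≤ 1 - θ := by linarith
    simp only [hK, ENNReal.mul_rpow_of_nonneg _ _ hθ0.le, ENNReal.mul_rpow_of_nonneg _ _ h1r,
      ENNReal.mul_rpow_of_nonneg _ _ h1θ, ← ENNReal.rpow_mul]
    rw [show 1 / p * (1 - θ) = (1 - θ) / p by ring]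
    ring
  calc MN q r C T ≤ MN q r C (fun ξ x => ∑' i : ℕ, ∑' l : ℕ,
        2⁻¹ ^ i * (F i l).indicator (fun _ => (1:ℝ≥0∞)) (ξ, x)) := MN_mono hq1 hr1 _ _ hdom
    _ ≤ ∑' i : ℕ, MN q r C (fun ξ x => ∑' l : ℕ,
        2⁻¹ ^ i * (F i l).indicator (fun _ => (1:ℝ≥0∞)) (ξ, x)) :=
        MN_tsum hq1 hr1 (fun i ξ x => ∑' l : ℕ,
          2⁻¹ ^ i * (F i l).indicator (fun _ => (1:ℝ≥0∞)) (ξ, x))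
          (fun i => Measurable.ennreal_tsum fun l => (hIm i l).const_mul _)
    _ ≤ ∑' i : ℕ, ∑' l : ℕ, MN q r C (fun ξ x =>
        2⁻¹ ^ i * (F i l).indicator (fun _ => (1:ℝ≥0∞)) (ξ, x)) :=
        ENNReal.tsum_le_tsum fun i => MN_tsum hq1 hr1 (fun l ξ x =>
          2⁻¹ ^ i * (F i l).indicator (fun _ => (1:ℝ≥0∞)) (ξ, x))
          (fun l => (hIm i l).const_mul _)
    _ ≤ ∑' i : ℕ, ∑' l : ℕ, ((2⁻¹ : ℝ≥0∞) ^ i) ^ θ * (((2⁻¹ : ℝ≥0∞) ^ l) ^ (1 / r * θ) *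
        (K * volume E ^ ((1 - θ) / p))) := by
        refine ENNReal.tsum_le_tsum fun i => ENNReal.tsum_le_tsum fun l => ?_
        rw [MN_const_mul hq1 hr1 _
          (fun ξ x => (F i l).indicator (fun _ => (1:ℝ≥0∞)) (ξ, x)) (hIm i l)]
        exact hterm i l
    _ = _ := by
        simp only [ENNReal.tsum_mul_left, ENNReal.tsum_mul_right]
        ring

lemma final_bound (n : ℕ) (C : ℝ) (p q r : ℝ)
    (hp : 1 ≤ p) (hpq : p ≤ q) (hqr : q < r) (θ : ℝ) (hθ1 : θ < 1) (A : ℝ≥0∞) (hA : A ≠ ∞)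
    (hE : ∀ E : Set (Euc n × ℝ), E ⊆ Qcube n → MeasurableSet E →
      MN q r C (xrayT (E.indicator fun _ => (1:ℝ≥0∞))) ≤ A * volume E ^ ((1 - θ) / p))
    (P δ : ℝ) (hP : 0 < P) (hδ : 0 < δ) (hPθ : P * ((1 - θ) / p) = 1 + δ) :
    ∃ A' : ℝ≥0∞, A' ≠ ∞ ∧ ∀ f : Euc n × ℝ → ℝ≥0∞, Measurable f →
        (∀ z, z ∉ Qcube n → f z = 0) → ∀ N : ℝ≥0∞, N ≠ 0 → N ≠ ∞ → lpNorm P f ≤ N →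
        kakeyaMixedNorm q r C f ≤ A' * N := by
  have hq1 : 1 ≤ q := by linarith
  have hr1 : 1 ≤ r := by linarith
  have hp0 : 0 < p := by linarith
  have hs0 : 0 ≤ (1 - θ) / p := div_nonneg (by linarith) hp0.le
  set K : ℝ≥0∞ := 1 + volume (Qcube n) with hK
  have hKt : K ≠ ∞ := by simp [hK, (Qcube_vol n).ne]
  refine ⟨2 * (A * K ^ ((1 - θ) / p)) * ∑' j : ℕ, ((2⁻¹ : ℝ≥0∞) ^ j) ^ δ, ?_, ?_⟩
  · exact ENNReal.mul_ne_top (ENNReal.mul_ne_top (by simp)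
      (ENNReal.mul_ne_top hA (ENNReal.rpow_ne_top_of_nonneg hs0 hKt))) (half_rpow_tsum hδ)
  intro f hf hfQ N hN0 hNt hfN
  set E : ℕ → Set (Euc n × ℝ) := fun j => Qcube n ∩ {z | N * 2 ^ j ≤ max (f z) N} with hEdef
  have hEm : ∀ j, MeasurableSet (E j) := fun j =>
    (Qcube_meas n).inter (measurableSet_le measurable_const (hf.max measurable_const))
  have hEQ : ∀ j, E j ⊆ Qcube n := fun j => Set.inter_subset_left
  have hpt : ∀ z, f z ≤ ∑' j : ℕ, N * 2 ^ (j + 1) * (E j).indicator (fun _ => (1:ℝ≥0∞)) z := by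
    intro z
    by_cases hz : z ∈ Qcube n
    swap
    · rw [hfQ z hz]; exact zero_le
    by_cases hex : ∃ j : ℕ, max (f z) N < N * 2 ^ (j + 1)
    · classical
      have hspec := Nat.find_spec hex
      have hmem : z ∈ E (Nat.find hex) := by
        refine ⟨hz, ?_⟩
        rcases h : Nat.find hex with _ | k
        · simp
        · exact not_lt.1 (Nat.find_min hex (m := k) (by omega))
      calc f z ≤ max (f z) N := le_max_left _ _
        _ ≤ N * 2 ^ (Nat.find hex + 1) *
            (E (Nat.find hex)).indicator (fun _ => (1:ℝ≥0∞)) z := by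
            rw [Set.indicator_of_mem hmem, mul_one]; exact hspec.le
        _ ≤ _ := ENNReal.le_tsum
          (f := fun j : ℕ => N * 2 ^ (j + 1) * (E j).indicator (fun _ => (1:ℝ≥0∞)) z) _
    · push Not at hex
      have : ∀ j, z ∈ E j := by
        intro j
        rcases j with _ | k
        · exact ⟨hz, by simp⟩
        · exact ⟨hz, hex k⟩
      have htop : ∑' j : ℕ, N * 2 ^ (j + 1) * (E j).indicator (fun _ => (1:ℝ≥0∞)) z = ∞ := by
        rw [eq_top_iff, ← ENNReal.tsum_const_eq_top_of_ne_zero (α := ℕ) hN0]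
        refine ENNReal.tsum_le_tsum fun j => ?_
        simp only [this j, Set.indicator_of_mem, mul_one]
        exact le_mul_of_one_le_right zero_le (one_le_pow₀ (by norm_num))
      rw [htop]; exact le_top
  have hint : ∫⁻ z, f z ^ P ≤ N ^ P := by
    have := ENNReal.rpow_le_rpow hfN hP.le
    unfold _root_.lpNorm at this
    rwa [← ENNReal.rpow_mul, one_div_mul_cancel hP.ne', ENNReal.rpow_one] at this
  have hvol : ∀ j, volume (E j) ≤ K * (2⁻¹ ^ j) ^ P := by
    intro j
    have hmk : (N * 2 ^ j) ^ P * volume (E j) ≤ N ^ P * K := by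
      calc (N * 2 ^ j) ^ P * volume (E j) = ∫⁻ z in E j, (N * 2 ^ j) ^ P := by
            rw [setLIntegral_const]
        _ ≤ ∫⁻ z in E j, (f z ^ P + N ^ P) := by
            refine setLIntegral_mono' (hEm j) fun z hz => ?_
            refine (ENNReal.rpow_le_rpow hz.2 hP.le).trans ?_
            rcases le_total (f z) N with h | h
            · rw [max_eq_right h]; exact le_add_self
            · rw [max_eq_left h]; exact le_self_add
        _ ≤ ∫⁻ z in Qcube n, (f z ^ P + N ^ P) := lintegral_mono_set (hEQ j)
        _ = (∫⁻ z in Qcube n, f z ^ P) + N ^ P * volume (Qcube n) := by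
            rw [lintegral_add_right _ measurable_const, setLIntegral_const]
        _ ≤ N ^ P + N ^ P * volume (Qcube n) := by
            gcongr; exact (setLIntegral_le_lintegral _ _).trans hint
        _ = N ^ P * K := by rw [hK]; ring
    have hNP0 : N ^ P ≠ 0 := by simp [hN0, hNt]
    have hNPt : N ^ P ≠ ∞ := ENNReal.rpow_ne_top_of_nonneg hP.le hNt
    rw [ENNReal.mul_rpow_of_nonneg _ _ hP.le, mul_assoc,
      ENNReal.mul_le_mul_iff_right hNP0 hNPt] at hmk
    have hinv : ((2⁻¹ : ℝ≥0∞) ^ j) ^ P * (2 ^ j) ^ P = 1 := by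
      rw [← ENNReal.mul_rpow_of_nonneg _ _ hP.le, ← mul_pow,
        ENNReal.inv_mul_cancel (by simp) (by simp)]
      simp
    calc volume (E j) = (2⁻¹ ^ j) ^ P * ((2 ^ j) ^ P * volume (E j)) := by
          rw [← mul_assoc, hinv, one_mul]
      _ ≤ (2⁻¹ ^ j) ^ P * K := by gcongr
      _ = _ := mul_comm _ _
  have hIm : ∀ j, Measurable ((E j).indicator (fun _ => (1:ℝ≥0∞))) := fun j =>
    measurable_const.indicator (hEm j)
  have hT : ∀ ξ x, xrayT f ξ x ≤
      ∑' j : ℕ, N * 2 ^ (j + 1) * xrayT ((E j).indicator (fun _ => (1:ℝ≥0∞))) ξ x := by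
    intro ξ x
    refine (xrayT_mono hpt ξ x).trans (le_of_eq ?_)
    rw [xrayT_tsum (fun j z => N * 2 ^ (j + 1) * (E j).indicator (fun _ => (1:ℝ≥0∞)) z)
      (fun j => (hIm j).const_mul _)]
    congr 1; ext j
    exact xrayT_const_mul _ _ (hIm j) ξ x
  calc kakeyaMixedNorm q r C f = MN q r C (xrayT f) := rfl
    _ ≤ MN q r C (fun ξ x => ∑' j : ℕ, N * 2 ^ (j + 1) *
          xrayT ((E j).indicator (fun _ => (1:ℝ≥0∞))) ξ x) :=
        MN_mono hq1 hr1 _ _ fun ξ _ => Filter.Eventually.of_forall fun x => hT ξ x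
    _ ≤ ∑' j : ℕ, MN q r C (fun ξ x => N * 2 ^ (j + 1) *
          xrayT ((E j).indicator (fun _ => (1:ℝ≥0∞))) ξ x) :=
        MN_tsum hq1 hr1 (fun j ξ x => N * 2 ^ (j + 1) *
          xrayT ((E j).indicator (fun _ => (1:ℝ≥0∞))) ξ x)
          (fun j => (xrayT_meas (hIm j)).const_mul _)
    _ ≤ ∑' j : ℕ, (2 * (A * K ^ ((1 - θ) / p))) * ((2⁻¹ ^ j) ^ δ) * N := by
        refine ENNReal.tsum_le_tsum fun j => ?_
        rw [MN_const_mul hq1 hr1 _ _ (xrayT_meas (hIm j))]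
        have h1 : volume (E j) ^ ((1 - θ) / p) ≤
            K ^ ((1 - θ) / p) * (2⁻¹ ^ j * (2⁻¹ ^ j) ^ δ) := by
          refine (ENNReal.rpow_le_rpow (hvol j) hs0).trans (le_of_eq ?_)
          rw [ENNReal.mul_rpow_of_nonneg _ _ hs0, ← ENNReal.rpow_mul, hPθ,
            ENNReal.rpow_add_of_nonneg _ _ zero_le_one hδ.le, ENNReal.rpow_one]
        have hinv : (2 : ℝ≥0∞) ^ j * 2⁻¹ ^ j = 1 := by
          rw [← mul_pow, ENNReal.mul_inv_cancel (by simp) (by simp), one_pow]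
        calc N * 2 ^ (j + 1) * MN q r C (xrayT ((E j).indicator (fun _ => (1:ℝ≥0∞))))
            ≤ N * 2 ^ (j + 1) * (A * (K ^ ((1 - θ) / p) * (2⁻¹ ^ j * (2⁻¹ ^ j) ^ δ))) := by
              gcongr
              exact (hE _ (hEQ j) (hEm j)).trans (by gcongr)
          _ = (2 * (A * K ^ ((1 - θ) / p))) * ((2⁻¹ ^ j) ^ δ) * N * (2 ^ j * 2⁻¹ ^ j) := by
              rw [pow_succ]; ring
          _ = _ := by rw [hinv, mul_one]
    _ = _ := by
        simp only [ENNReal.tsum_mul_left, ENNReal.tsum_mul_right]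

/-- Reduction to weak estimates: if the restricted weak-type estimate
`ℒ^d(E)^{1/p} ≳ λ ℒ^{2(d-1)}(F)^{1/q} m(F)^{1/r - 1/q}` holds for all `E ⊆ Q`,
then `‖T[f]‖_{L^q(L^r),K} ≲ ‖f‖_{L^{p+ε}}` for `f` supported on `Q`. -/
theorem statement9 (d : ℕ) (hd : 2 ≤ d) (C : ℝ) (hC : 0 < C) (p q r : ℝ)
    (hp : 1 ≤ p) (hpq : p ≤ q) (hqr : q < r)
    (c : ℝ) (hc : 0 < c)
    (hweak : ∀ E : Set (Euc (d - 1) × ℝ), E ⊆ Qcube (d - 1) → MeasurableSet E →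
      ∀ lam : ℝ, lam ∈ Set.Ioc (0:ℝ) 1 →
      ∀ F : Set (Euc (d - 1) × Euc (d - 1)),
        F ⊆ (Metric.ball (0 : Euc (d - 1)) C) ×ˢ (Set.univ : Set (Euc (d - 1))) →
        MeasurableSet F →
        (∀ w ∈ F, ENNReal.ofReal lam ≤ xrayT (E.indicator fun _ => (1:ℝ≥0∞)) w.1 w.2) →
        ENNReal.ofReal (c * lam) * (volume F) ^ (1/q) * (mF F) ^ (1/r - 1/q)
          ≤ (volume E) ^ (1/p)) :
    ∀ ε : ℝ, 0 < ε → ∃ A : ℝ, 0 < A ∧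
      ∀ f : Euc (d - 1) × ℝ → ℝ≥0∞, Measurable f →
        (∀ z, z ∉ Qcube (d - 1) → f z = 0) →
        kakeyaMixedNorm q r C f ≤ ENNReal.ofReal A * lpNorm (p + ε) f := by
  intro ε hε
  have hp0 : 0 < p := by linarith
  set θ : ℝ := ε / 2 / (p + ε) with hθ
  have hθ0 : 0 < θ := by positivity
  have hθ1 : θ < 1 := by
    rw [hθ, div_lt_one (by positivity)]; linarith
  obtain ⟨A, hA, hE⟩ := char_bound (d - 1) C p q r hp hpq hqr c hc hweak θ hθ0 hθ1
  obtain ⟨A', hA', hmain⟩ := final_bound (d - 1) C p q r hp hpq hqr θ hθ1 A hA hE (p + ε)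
    (ε / (2 * p)) (by positivity) (by positivity) (by rw [hθ]; field_simp; ring)
  refine ⟨A'.toReal + 1, by positivity, ?_⟩
  intro f hf hfQ
  have hA1 : ENNReal.ofReal (A'.toReal + 1) = A' + 1 := by
    rw [ENNReal.ofReal_add (by positivity) (by norm_num), ENNReal.ofReal_toReal hA']
    simp
  rw [hA1]
  have hA1t : A' + 1 ≠ ∞ := by simp [hA']
  by_cases htop : lpNorm (p + ε) f = ∞
  · rw [htop, ENNReal.mul_top (by simp)]; exact le_top
  have key : ∀ k : ℕ, kakeyaMixedNorm q r C f ≤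
      (A' + 1) * (lpNorm (p + ε) f + 2⁻¹ ^ k) := by
    intro k
    refine (hmain f hf hfQ (lpNorm (p + ε) f + 2⁻¹ ^ k) (by simp) ?_ le_self_add).trans ?_
    · simp [htop]
    · gcongr; exact le_self_add
  have hlim : Filter.Tendsto (fun k : ℕ => (A' + 1) * (lpNorm (p + ε) f + 2⁻¹ ^ k))
      Filter.atTop (nhds ((A' + 1) * (lpNorm (p + ε) f + 0))) :=
    ENNReal.Tendsto.const_mul (tendsto_const_nhds.add
      (ENNReal.tendsto_pow_atTop_nhds_zero_of_lt_one (by simp))) (Or.inr hA1t)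
  rw [add_zero] at hlim
  exact ge_of_tendsto' hlim key

end
end

section
/- Let d ≥ 2 be an integer, let C > 0, let 1 ≤ p ≤ q ≤ r < ∞ with 1 + (d−1)/r ≥ d/p, and let ε > 0, C_ε > 0, λ_0 ∈ (0,1]. Suppose that ℒ^d(E) ≥ C_ε λ^{p+ε} ℒ^{2(d−1)}(F)^{p/q} m(F)^{p(1/r − 1/q)} whenever E ⊆ Q is measurable, λ ≥ λ_0, and F ⊆ B(0,C) × ℝ^{d−1} is measurable with T[χ_E](ξ,x) ≥ λ for all (ξ,x) ∈ F. Then for every ρ ∈ (0,1), every axis-parallel sub-cube Q̃ ⊆ Q of side length ρ, every measurable Ẽ ⊆ Q̃, every λ̃ ≥ ρ λ_0, and every measurable F̃ ⊆ B(0,C) × ℝ^{d−1} with T[χ_{Ẽ}](ξ,x) ≥ λ̃ for all (ξ,x) ∈ F̃, one has ℒ^d(Ẽ) ≥ ρ^{−ε} C_ε λ̃^{p+ε} ℒ^{2(d−1)}(F̃)^{p/q} m(F̃)^{p(1/r − 1/q)}. -/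
open MeasureTheory ENNReal

noncomputable section

/-- The closed axis-parallel cube with lower corner `(a, b)` and side length `ρ`. -/
def subCube (n : ℕ) (a : Euc n) (b ρ : ℝ) : Set (Euc n × ℝ) :=
  {z | (∀ i, z.1 i ∈ Set.Icc (a i) (a i + ρ)) ∧ z.2 ∈ Set.Icc b (b + ρ)}

lemma aux_vol_aff {V : Type*} [NormedAddCommGroup V] [NormedSpace ℝ V] [MeasurableSpace V]
    [BorelSpace V] [FiniteDimensional ℝ V] (μ : Measure V) [μ.IsAddHaarMeasure]
    (v : V) {ρ : ℝ} (hρ : 0 < ρ) (S : Set V) :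
    μ {z | v + ρ • z ∈ S} = ENNReal.ofReal ((ρ ^ Module.finrank ℝ V)⁻¹) * μ S := by
  have : {z | v + ρ • z ∈ S} = (ρ • ·) ⁻¹' ((v + ·) ⁻¹' S) := rfl
  rw [this, Measure.addHaar_preimage_smul μ hρ.ne', measure_preimage_add,
    abs_of_pos (by positivity)]

lemma aux_xray {n : ℕ} (E : Set (Euc n × ℝ)) (hE : MeasurableSet E) (ξ x : Euc n) :
    xrayT (E.indicator fun _ => (1:ℝ≥0∞)) ξ x
      = volume ({t : ℝ | (x + t • ξ, t) ∈ E} ∩ Set.Ioc 0 1) := by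
  have hm : MeasurableSet {t : ℝ | (x + t • ξ, t) ∈ E} := by
    have : Measurable fun t : ℝ => (x + t • ξ, t) := by fun_prop
    exact this hE
  unfold xrayT
  have : (fun t : ℝ => E.indicator (fun _ => (1:ℝ≥0∞)) (x + t • ξ, t))
      = {t : ℝ | (x + t • ξ, t) ∈ E}.indicator 1 := by
    ext t; simp [Set.indicator]
  rw [this, lintegral_indicator_one hm, Measure.restrict_apply hm]

lemma aux_mul_rpow {c : ℝ} (hc : 0 < c) (m : ℝ≥0∞) (z : ℝ) :
    (ENNReal.ofReal c * m) ^ z = ENNReal.ofReal (c ^ z) * m ^ z := by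
  rw [← ENNReal.ofReal_rpow_of_pos hc, ENNReal.mul_rpow_eq_ite]
  have h0 : ENNReal.ofReal c ≠ 0 := by simpa using hc
  have h1 : ENNReal.ofReal c ≠ ⊤ := ENNReal.ofReal_ne_top
  rw [if_neg]
  rintro ⟨h | h, hz⟩
  · exact h0 h.1
  · exact h1 h.1

/-- Induction on scales (Claim 2): the weak estimate on the unit cube `Q` implies
a gain of `ρ^{-ε}` for sets contained in sub-cubes of side length `ρ`. -/
theorem statement10 (d : ℕ) (hd : 2 ≤ d) (C : ℝ) (hC : 0 < C) (p q r : ℝ)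
    (hp : 1 ≤ p) (hpq : p ≤ q) (hqr : q ≤ r) (hdim : 1 + ((d:ℝ) - 1) / r ≥ (d:ℝ) / p)
    (ε Cε lam₀ : ℝ) (hε : 0 < ε) (hCε : 0 < Cε) (hlam₀ : lam₀ ∈ Set.Ioc (0:ℝ) 1)
    (hweak : ∀ E : Set (Euc (d - 1) × ℝ), E ⊆ Qcube (d - 1) → MeasurableSet E →
      ∀ lam : ℝ, lam₀ ≤ lam →
      ∀ F : Set (Euc (d - 1) × Euc (d - 1)),
        F ⊆ (Metric.ball (0 : Euc (d - 1)) C) ×ˢ (Set.univ : Set (Euc (d - 1))) →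
        MeasurableSet F →
        (∀ w ∈ F, ENNReal.ofReal lam ≤ xrayT (E.indicator fun _ => (1:ℝ≥0∞)) w.1 w.2) →
        ENNReal.ofReal Cε * ENNReal.ofReal lam ^ (p + ε) * (volume F) ^ (p / q) *
            (mF F) ^ (p * (1/r - 1/q))
          ≤ volume E) :
    ∀ ρ : ℝ, ρ ∈ Set.Ioo (0:ℝ) 1 → ∀ (a : Euc (d - 1)) (b : ℝ),
      subCube (d - 1) a b ρ ⊆ Qcube (d - 1) →
      ∀ E' : Set (Euc (d - 1) × ℝ), E' ⊆ subCube (d - 1) a b ρ → MeasurableSet E' →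
      ∀ lam' : ℝ, ρ * lam₀ ≤ lam' →
      ∀ F' : Set (Euc (d - 1) × Euc (d - 1)),
        F' ⊆ (Metric.ball (0 : Euc (d - 1)) C) ×ˢ (Set.univ : Set (Euc (d - 1))) →
        MeasurableSet F' →
        (∀ w ∈ F', ENNReal.ofReal lam' ≤ xrayT (E'.indicator fun _ => (1:ℝ≥0∞)) w.1 w.2) →
        ENNReal.ofReal (ρ ^ (-ε) * Cε) * ENNReal.ofReal lam' ^ (p + ε) *
            (volume F') ^ (p / q) * (mF F') ^ (p * (1/r - 1/q))
          ≤ volume E' := by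
  have hdn : (d : ℝ) = ((d - 1 : ℕ) : ℝ) + 1 := by
    have : d = (d - 1) + 1 := by omega
    exact_mod_cast this
  generalize d - 1 = n at hweak hdn ⊢
  intro ρ hρ' a b hsub E' hE' hmE lam' hlam F' hF' hmF hT
  obtain ⟨hρ, hρ1⟩ := hρ'
  have hlam' : 0 < lam' := lt_of_lt_of_le (mul_pos hρ hlam₀.1) hlam
  set h : Euc n := WithLp.toLp 2 (fun _ => (1/2 : ℝ)) with hh
  set v : Euc n := a + ρ • h with hv
  set E : Set (Euc n × ℝ) := {z | ((v, b) : Euc n × ℝ) + ρ • z ∈ E'} with hEdef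
  set F : Set (Euc n × Euc n) := {w | (w.1, (v - b • w.1) + ρ • w.2) ∈ F'} with hFdef
  have hmE2 : MeasurableSet E := by
    have : Measurable fun z : Euc n × ℝ => ((v, b) : Euc n × ℝ) + ρ • z := by fun_prop
    exact this hmE
  have hmF2 : MeasurableSet F := by
    have : Measurable fun w : Euc n × Euc n => (w.1, (v - b • w.1) + ρ • w.2) := by fun_prop
    exact this hmF
  have hEQ : E ⊆ Qcube n := by
    intro z hz
    have h1 := hE' hz
    obtain ⟨h2, h3⟩ := h1
    refine ⟨fun i => ?_, ?_⟩
    · have := h2 i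
      simp only [hv, hh, Prod.fst_add, Prod.smul_fst, PiLp.add_apply, PiLp.smul_apply, smul_eq_mul,
        Set.mem_Icc] at this
      constructor <;> nlinarith [this.1, this.2]
    · simp only [Prod.snd_add, Prod.smul_snd, smul_eq_mul, Set.mem_Icc] at h3
      constructor <;> nlinarith [h3.1, h3.2]
  have hFB : F ⊆ (Metric.ball (0 : Euc n) C) ×ˢ (Set.univ : Set (Euc n)) := by
    intro w hw
    exact ⟨(hF' hw).1, trivial⟩
  have hTF : ∀ w ∈ F, ENNReal.ofReal (lam' / ρ) ≤
      xrayT (E.indicator fun _ => (1:ℝ≥0∞)) w.1 w.2 := by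
    rintro ⟨ξ, x⟩ hw
    have h1 := hT _ hw
    rw [aux_xray _ hmE] at h1
    rw [aux_xray _ hmE2]
    simp only at h1 ⊢
    set S' : Set ℝ := {t : ℝ | ((v - b • ξ) + ρ • x + t • ξ, t) ∈ E'} with hS'
    have hS : {t : ℝ | (x + t • ξ, t) ∈ E} = {t : ℝ | b + ρ • t ∈ S'} := by
      ext t
      simp only [hEdef, hS', Set.mem_setOf_eq, Prod.smul_mk, Prod.mk_add_mk, smul_eq_mul]
      have : v + ρ • (x + t • ξ) = v - b • ξ + ρ • x + (b + ρ * t) • ξ := by module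
      rw [this]
    have hvol : volume {t : ℝ | (x + t • ξ, t) ∈ E} = ENNReal.ofReal (ρ⁻¹) * volume S' := by
      rw [hS, aux_vol_aff volume b hρ S']; simp
    have h2 : volume {t : ℝ | (x + t • ξ, t) ∈ E}
        ≤ volume ({t : ℝ | (x + t • ξ, t) ∈ E} ∩ Set.Ioc 0 1) := by
      rw [← measure_diff_null (s := {t : ℝ | (x + t • ξ, t) ∈ E}) (t := {0}) (by simp)]
      apply measure_mono
      rintro t ⟨ht, ht0⟩
      have := (hEQ ht).2
      exact ⟨ht, lt_of_le_of_ne this.1 (Ne.symm ht0), this.2⟩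
    refine le_trans ?_ h2
    rw [hvol, div_eq_inv_mul, ENNReal.ofReal_mul (by positivity)]
    gcongr
    exact h1.trans (measure_mono Set.inter_subset_left)
  set c : ℝ := (ρ ^ n)⁻¹ with hc
  have hc0 : 0 < c := by positivity
  have hslice : ∀ ξ : Euc n, volume {x : Euc n | (ξ, x) ∈ F}
      = ENNReal.ofReal c * volume {x : Euc n | (ξ, x) ∈ F'} := by
    intro ξ
    have := aux_vol_aff volume (v - b • ξ) hρ {x : Euc n | (ξ, x) ∈ F'}
    simpa [hc, hFdef] using this
  have hmFF : mF F = ENNReal.ofReal c * mF F' := by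
    simp only [mF, hslice, ENNReal.mul_iSup]
  have hvF : volume F = ENNReal.ofReal c * volume F' := by
    rw [Measure.volume_eq_prod, Measure.prod_apply hmF2, Measure.prod_apply hmF,
      ← lintegral_const_mul _ (measurable_measure_prodMk_left hmF)]
    exact lintegral_congr hslice
  have hvE : volume E = ENNReal.ofReal ((ρ ^ (n+1))⁻¹) * volume E' := by
    rw [Measure.volume_eq_prod]
    have := aux_vol_aff ((volume : Measure (Euc n)).prod (volume : Measure ℝ)) (v, b) hρ E'
    simpa using this
  have key := hweak E hEQ hmE2 (lam' / ρ) (by rw [le_div_iff₀ hρ]; linarith) F hFB hmF2 hTF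
  rw [hvF, hmFF, hvE, aux_mul_rpow hc0, aux_mul_rpow hc0, div_eq_inv_mul,
    ENNReal.ofReal_mul (by positivity), aux_mul_rpow (by positivity)] at key
  set L := ENNReal.ofReal lam' ^ (p + ε)
  set A := volume F' ^ (p / q)
  set B := mF F' ^ (p * (1/r - 1/q))
  have hρE : volume E' = ENNReal.ofReal (ρ ^ (n+1)) *
      (ENNReal.ofReal ((ρ ^ (n+1))⁻¹) * volume E') := by
    rw [← mul_assoc, ← ENNReal.ofReal_mul (by positivity), mul_inv_cancel₀ (by positivity)]
    simp
  rw [hρE]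
  refine le_trans ?_ (mul_le_mul_right key _)
  have e1 : ENNReal.ofReal (ρ ^ (n+1)) * (ENNReal.ofReal Cε * (ENNReal.ofReal (ρ⁻¹ ^ (p + ε)) * L) *
      (ENNReal.ofReal (c ^ (p / q)) * A) * (ENNReal.ofReal (c ^ (p * (1/r - 1/q))) * B))
      = ENNReal.ofReal (ρ ^ (n+1) * ρ⁻¹ ^ (p + ε) * c ^ (p / q) * c ^ (p * (1/r - 1/q)) * Cε)
        * L * A * B := by
    rw [ENNReal.ofReal_mul (by positivity), ENNReal.ofReal_mul (by positivity),
      ENNReal.ofReal_mul (by positivity), ENNReal.ofReal_mul (by positivity)]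
    ring
  rw [e1]
  gcongr
  have hcr : c = ρ ^ (-(n:ℝ)) := by rw [hc, Real.rpow_neg hρ.le, Real.rpow_natCast]
  rw [hcr, ← Real.rpow_neg_one, ← Real.rpow_natCast, ← Real.rpow_mul hρ.le, ← Real.rpow_mul hρ.le,
    ← Real.rpow_mul hρ.le, ← Real.rpow_add hρ, ← Real.rpow_add hρ, ← Real.rpow_add hρ]
  apply Real.rpow_le_rpow_of_exponent_ge hρ hρ1.le
  have hp0 : 0 < p := by linarith
  have hq0 : 0 < q := by linarith
  have hr0 : 0 < r := by linarith
  have h5 : p * (d / p) ≤ p * (1 + (d - 1) / r) := mul_le_mul_of_nonneg_left hdim hp0.le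
  rw [mul_div_cancel₀ _ hp0.ne', hdn] at h5
  have h6 : ((n + 1 : ℕ) : ℝ) + -1 * (p + ε) + -(n:ℝ) * (p / q) + -(n:ℝ) * (p * (1 / r - 1 / q))
      = (n + 1) - p * (1 + (n + 1 - 1) / r) - ε := by
    push_cast; field_simp; ring
  rw [h6]; linarith


end
end

section
/- Let G be a set of lines as in the context and let t_1, t_2 ∈ ℝ with t_1 ≠ t_2. Then |G| ≤ |t_1 − t_2|^{−(d−1)} · ℒ^{d−1}(π_{t_1}(G)) · ℒ^{d−1}(π_{t_2}(G)). -/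
open MeasureTheory ENNReal

noncomputable section

/-- The slice `π_t(G) = {x + tξ : (ξ,x) ∈ G_X}` of a set of lines `G`, where
`(ξ,x)` encodes the line through `x` and `x + ξ + e_d`. -/
def lineSlice {n : ℕ} (G : Set (Euc n × Euc n)) (t : ℝ) : Set (Euc n) :=
  {y | ∃ w ∈ G, y = w.2 + t • w.1}

/-- `m(G) = sup_ξ ℒ^{d-1}({x : (ξ,x) ∈ G_X})`. -/
def mG {n : ℕ} (G : Set (Euc n × Euc n)) : ℝ≥0∞ :=
  ⨆ ξ : Euc n, volume {x : Euc n | (ξ, x) ∈ G}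

/-- `D_{t,t'} = |t - t'|^{-(d-1)}` (as an extended real). -/
def Dcoef (d : ℕ) (t t' : ℝ) : ℝ≥0∞ :=
  ENNReal.ofReal |t - t'| ^ (-((d:ℝ) - 1))

theorem two_slice_aux {n : ℕ} (A B : Set (Euc n)) (hA : MeasurableSet A) (hB : MeasurableSet B)
    (t₁ t₂ : ℝ) (ht : t₁ ≠ t₂) :
    volume {w : Euc n × Euc n | w.2 + t₁ • w.1 ∈ A ∧ w.2 + t₂ • w.1 ∈ B} =
      ENNReal.ofReal |((t₂ - t₁) ^ n)⁻¹| * volume B * volume A := by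
  have hne : t₂ - t₁ ≠ 0 := sub_ne_zero.mpr (Ne.symm ht)
  have hS : MeasurableSet {w : Euc n × Euc n | w.2 + t₁ • w.1 ∈ A ∧ w.2 + t₂ • w.1 ∈ B} := by
    apply MeasurableSet.inter
    · exact hA.preimage (f := fun w : Euc n × Euc n => w.2 + t₁ • w.1) (by fun_prop)
    · exact hB.preimage (f := fun w : Euc n × Euc n => w.2 + t₂ • w.1) (by fun_prop)
  have hT : MeasurableSet {w : Euc n × Euc n | w.2 ∈ A ∧ w.2 + (t₂ - t₁) • w.1 ∈ B} := by
    apply MeasurableSet.inter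
    · exact hA.preimage measurable_snd
    · exact hB.preimage (f := fun w : Euc n × Euc n => w.2 + (t₂ - t₁) • w.1) (by fun_prop)
  have e1 : volume {w : Euc n × Euc n | w.2 + t₁ • w.1 ∈ A ∧ w.2 + t₂ • w.1 ∈ B} =
      volume {w : Euc n × Euc n | w.2 ∈ A ∧ w.2 + (t₂ - t₁) • w.1 ∈ B} := by
    rw [Measure.volume_eq_prod, Measure.prod_apply hS, Measure.prod_apply hT]
    refine lintegral_congr fun ξ => ?_
    rw [← measure_preimage_add_right volume (t₁ • ξ) (Prod.mk ξ ⁻¹'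
      {w : Euc n × Euc n | w.2 ∈ A ∧ w.2 + (t₂ - t₁) • w.1 ∈ B})]
    congr 1
    ext x
    have : x + t₁ • ξ + (t₂ - t₁) • ξ = x + t₂ • ξ := by module
    simp [this]
  rw [e1, Measure.volume_eq_prod, Measure.prod_apply_symm hT]
  have key : ∀ y : Euc n, volume ((fun ξ => (ξ, y)) ⁻¹'
      {w : Euc n × Euc n | w.2 ∈ A ∧ w.2 + (t₂ - t₁) • w.1 ∈ B}) =
      A.indicator (fun _ => ENNReal.ofReal |((t₂ - t₁) ^ n)⁻¹| * volume B) y := by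
    intro y
    by_cases hy : y ∈ A
    · have h := Measure.addHaar_preimage_smul (volume : Measure (Euc n)) hne
        ((fun x => y + x) ⁻¹' B)
      rw [measure_preimage_add, finrank_euclideanSpace_fin] at h
      rw [Set.indicator_of_mem hy, ← h]
      congr 1
      ext ξ
      simp [hy]
    · simp [hy]
  simp_rw [key]
  rw [lintegral_indicator hA, setLIntegral_const]

/-- The trivial two-slice estimate:
`|G| ≤ |t₁ - t₂|^{-(d-1)} ℒ^{d-1}(π_{t₁}(G)) ℒ^{d-1}(π_{t₂}(G))`. -/
theorem statement11 (d : ℕ) (hd : 2 ≤ d) (G : Set (Euc (d - 1) × Euc (d - 1)))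
    (hG : MeasurableSet G) (hGfin : volume G ≠ ⊤) (hmfin : mG G ≠ ⊤)
    (t₁ t₂ : ℝ) (ht : t₁ ≠ t₂)
    (h₁ : volume (lineSlice G t₁) ≠ ⊤) (h₂ : volume (lineSlice G t₂) ≠ ⊤) :
    volume G ≤ Dcoef (d) t₁ t₂ * volume (lineSlice G t₁) * volume (lineSlice G t₂) := by
  have hsub : G ⊆ {w : Euc (d - 1) × Euc (d - 1) |
      w.2 + t₁ • w.1 ∈ toMeasurable volume (lineSlice G t₁) ∧
      w.2 + t₂ • w.1 ∈ toMeasurable volume (lineSlice G t₂)} := fun w hw =>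
    ⟨subset_toMeasurable _ _ ⟨w, hw, rfl⟩, subset_toMeasurable _ _ ⟨w, hw, rfl⟩⟩
  refine (measure_mono hsub).trans (le_of_eq ?_)
  rw [two_slice_aux _ _ (measurableSet_toMeasurable _ _) (measurableSet_toMeasurable _ _) t₁ t₂ ht,
    measure_toMeasurable, measure_toMeasurable]
  have hD : Dcoef d t₁ t₂ = ENNReal.ofReal |((t₂ - t₁) ^ (d - 1))⁻¹| := by
    have hpos : 0 < |t₁ - t₂| := abs_pos.mpr (sub_ne_zero.mpr ht)
    have hc : (d : ℝ) - 1 = ((d - 1 : ℕ) : ℝ) := by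
      rw [Nat.cast_sub (by omega)]; simp
    rw [Dcoef, ENNReal.ofReal_rpow_of_pos hpos, hc, Real.rpow_neg hpos.le, Real.rpow_natCast,
      abs_inv, abs_pow, abs_sub_comm]
  rw [hD]
  ring

end
end

section
/- Let d ≥ 2 be an integer. There is a constant K > 0 depending only on d such that the following holds. Let t_1, t_{1'}, t_2, t_{2'}, t_0, t_∞ ∈ ℝ satisfy t_1 ≠ t_2; t_0 ∉ {t_∞, t_1, t_{1'}, t_2, t_{2'}}; t_∞ ∉ {t_1, t_2}; and (t_∞ − t_0)(t_1 − t_0)/((t_1 − t_∞)(t_{1'} − t_0)) = (t_∞ − t_0)(t_2 − t_0)/((t_2 − t_∞)(t_{2'} − t_0)). Then every set of lines G (as in the context) satisfies |G|^4 ≤ K · D_{t_1,t_2} · D_{t_0,t_∞} · D_{t_{1'},t_0} · D_{t_{2'},t_0} · m(G) · sup_{t ∈ {t_∞, t_0, t_1, t_{1'}, t_2, t_{2'}}} ℒ^{d−1}(π_t(G))^7. -/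
open MeasureTheory ENNReal

noncomputable section

/-- Cauchy-Schwarz for a function supported in a set. -/
theorem cs_aux {α : Type*} [MeasurableSpace α] (μ : Measure α) (f : α → ℝ≥0∞) (hf : Measurable f)
    (S : Set α) (hS : MeasurableSet S) (hfS : ∀ x, f x ≠ 0 → x ∈ S) :
    (∫⁻ x, f x ∂μ) ^ 2 ≤ μ S * ∫⁻ x, f x ^ 2 ∂μ := by
  have h := ENNReal.lintegral_mul_le_Lp_mul_Lq μ (Real.HolderConjugate.two_two) hf.aemeasurable
    (measurable_one.indicator hS : Measurable (S.indicator (1 : α → ℝ≥0∞))).aemeasurable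
  have e1 : (f * S.indicator (1 : α → ℝ≥0∞)) = f := by
    funext x
    by_cases hx : x ∈ S
    · simp [hx]
    · have : f x = 0 := by
        by_contra h'
        exact hx (hfS x h')
      simp [this]
  have e2 : ∫⁻ a, (S.indicator (1 : α → ℝ≥0∞) a) ^ (2:ℝ) ∂μ = μ S := by
    rw [← lintegral_indicator_one hS]
    congr 1
    funext x
    by_cases hx : x ∈ S <;> simp [hx]
  rw [e1, e2] at h
  calc (∫⁻ x, f x ∂μ) ^ 2 ≤ _ := pow_le_pow_left' h 2
    _ = _ := by
      rw [mul_pow, ← ENNReal.rpow_natCast, ← ENNReal.rpow_natCast, ← ENNReal.rpow_mul,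
        ← ENNReal.rpow_mul]
      norm_num [mul_comm]

theorem scale_aux {n : ℕ} (c : ℝ) (hc : c ≠ 0) (v : Euc n) (U : Set (Euc n)) (hU : MeasurableSet U) :
    ∫⁻ x, U.indicator (1 : Euc n → ℝ≥0∞) (c • x + v) = ENNReal.ofReal |(c ^ n)⁻¹| * volume U := by
  have : ∀ x, U.indicator (1 : Euc n → ℝ≥0∞) (c • x + v) =
     ((fun x : Euc n => c • x) ⁻¹' ((fun x => x + v) ⁻¹' U)).indicator 1 x := by
    intro x; rfl
  simp_rw [this]
  rw [lintegral_indicator_one, Measure.addHaar_preimage_smul _ hc, measure_preimage_add_right]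
  · simp
  · exact (measurable_const_smul c) ((measurable_add_const v) hU)

theorem partA {n : ℕ} (φ : Euc n × Euc n → ℝ≥0∞) (hφ : Measurable φ) (α β : ℝ)
    (S0 S1 Sa : Set (Euc n)) (m0 : MeasurableSet S0) (m1 : MeasurableSet S1)
    (ma : MeasurableSet Sa)
    (h0 : ∀ y ξ, φ (y, ξ) ≠ 0 → y ∈ S0) (h1 : ∀ y ξ, φ (y, ξ) ≠ 0 → ξ + α • y ∈ S1)
    (ha : ∀ y ξ, φ (y, ξ) ≠ 0 → ξ + β • y ∈ Sa) :
    (∫⁻ z, φ z) ^ 4 ≤ volume S0 ^ 2 * (volume S1 * volume Sa) *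
      ∫⁻ y' : Euc n, ∫⁻ x : (Euc n × Euc n) × Euc n,
        (φ (x.2, x.1.1 - α • x.2) * φ (x.2, x.1.2 - β • x.2)) *
        (φ (y', x.1.1 - α • y') * φ (y', x.1.2 - β • y')) := by
  set f : Euc n → (Euc n × Euc n) → ℝ≥0∞ :=
    fun y p => φ (y, p.1 - α • y) * φ (y, p.2 - β • y) with hf
  have hfm : Measurable (fun z : Euc n × (Euc n × Euc n) => f z.1 z.2) := by
    simp only [hf]; fun_prop
  have hfm2 : ∀ y, Measurable (f y) := fun y => by simp only [hf]; fun_prop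
  have hfm3 : ∀ p, Measurable (fun y => f y p) := fun p => by simp only [hf]; fun_prop
  set h : (Euc n × Euc n) → ℝ≥0∞ := fun p => ∫⁻ y, f y p with hh
  have hhm : Measurable h := by
    exact Measurable.lintegral_prod_left hfm
  set M : Euc n → ℝ≥0∞ := fun y => ∫⁻ ξ, φ (y, ξ) with hM
  have hMm : Measurable M := Measurable.lintegral_prod_right hφ
  have eI : ∫⁻ z, φ z = ∫⁻ y, M y := lintegral_prod _ hφ.aemeasurable
  have c1 : (∫⁻ y, M y) ^ 2 ≤ volume S0 * ∫⁻ y, M y ^ 2 := by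
    apply cs_aux _ _ hMm _ m0
    intro y hy
    by_contra hc
    apply hy
    have : ∀ ξ, φ (y, ξ) = 0 := fun ξ => by
      by_contra h'
      exact hc (h0 _ _ h')
    simp [hM, this]
  have e2 : ∀ y, M y ^ 2 = ∫⁻ p, f y p := by
    intro y
    simp only [hf]
    rw [show (volume : Measure (Euc n × Euc n)) = volume.prod volume from rfl,
      lintegral_prod_mul (f := fun P => φ (y, P - α • y)) (g := fun P => φ (y, P - β • y))
        (by fun_prop) (by fun_prop),
      lintegral_sub_right_eq_self (fun P => φ (y, P)), lintegral_sub_right_eq_self (fun P => φ (y, P)),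
      sq]
  have e3 : ∫⁻ y, M y ^ 2 = ∫⁻ p, h p := by
    simp_rw [e2]
    exact lintegral_lintegral_swap hfm.aemeasurable
  have c2 : (∫⁻ p, h p) ^ 2 ≤ volume (S1 ×ˢ Sa) * ∫⁻ p, h p ^ 2 := by
    apply cs_aux _ _ hhm _ (m1.prod ma)
    intro p hp
    by_contra hc
    apply hp
    have : ∀ y, f y p = 0 := fun y => by
      by_contra h'
      apply hc
      simp only [hf, mul_ne_zero_iff] at h'
      have A := h1 _ _ h'.1
      have B := ha _ _ h'.2
      simp only [sub_add_cancel] at A B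
      exact ⟨A, B⟩
    simp [hh, this]
  have e4 : ∫⁻ p, h p ^ 2 = ∫⁻ y' : Euc n, ∫⁻ x : (Euc n × Euc n) × Euc n,
      f x.2 x.1 * f y' x.1 := by
    have : ∀ p, h p ^ 2 = ∫⁻ y', h p * f y' p := by
      intro p
      rw [lintegral_const_mul _ (hfm3 p), sq]
    simp_rw [this]
    rw [lintegral_lintegral_swap]
    · congr 1
      funext y'
      rw [show (volume : Measure ((Euc n × Euc n) × Euc n)) = volume.prod volume from rfl,
        lintegral_prod _ (by simp only [hf]; fun_prop)]
      congr 1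
      funext p
      simp only
      rw [lintegral_mul_const _ (hfm3 p)]
    · apply Measurable.aemeasurable
      apply Measurable.mul
      · exact hhm.comp measurable_fst
      · exact hfm.comp measurable_swap
  have e5 : volume (S1 ×ˢ Sa) = volume S1 * volume Sa := Measure.prod_prod _ _
  calc (∫⁻ z, φ z) ^ 4 = ((∫⁻ y, M y) ^ 2) ^ 2 := by rw [eI]; ring
    _ ≤ (volume S0 * ∫⁻ p, h p) ^ 2 := by rw [← e3]; exact pow_le_pow_left' c1 2
    _ = volume S0 ^ 2 * (∫⁻ p, h p) ^ 2 := by ring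
    _ ≤ volume S0 ^ 2 * (volume (S1 ×ˢ Sa) * ∫⁻ p, h p ^ 2) := by gcongr
    _ = _ := by rw [e4, e5]; ring

theorem partB {n : ℕ} (φ : Euc n × Euc n → ℝ≥0∞) (hφ : Measurable φ) (hφ1 : ∀ z, φ z ≤ 1)
    (m : ℝ≥0∞) (hm : ∀ ξ, ∫⁻ y, φ (y, ξ) ≤ m)
    (t₁ a t₂ b s : ℝ) (n1 : t₁ ≠ 0) (na : a ≠ 0) (n2 : t₂ ≠ 0) (nb : b ≠ 0) (ns : s ≠ 0)
    (h12 : t₁ ≠ t₂) (hrel : (1 - s / t₁) * a = (1 - s / t₂) * b)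
    (U2 Ub Us : Set (Euc n)) (m2 : MeasurableSet U2) (mb : MeasurableSet Ub)
    (ms : MeasurableSet Us)
    (h2 : ∀ y ξ, φ (y, ξ) ≠ 0 → y + t₂ • ξ ∈ U2) (hb : ∀ y ξ, φ (y, ξ) ≠ 0 → y + b • ξ ∈ Ub)
    (hs : ∀ y ξ, φ (y, ξ) ≠ 0 → y + s • ξ ∈ Us) :
    (∫⁻ y' : Euc n, ∫⁻ x : (Euc n × Euc n) × Euc n,
        (φ (x.2, x.1.1 - t₁⁻¹ • x.2) * φ (x.2, x.1.2 - a⁻¹ • x.2)) *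
        (φ (y', x.1.1 - t₁⁻¹ • y') * φ (y', x.1.2 - a⁻¹ • y'))) ≤
    m * ((ENNReal.ofReal |(s ^ n)⁻¹| * volume Us) *
      ((ENNReal.ofReal |((1 - t₂ / t₁) ^ n)⁻¹| * volume U2) *
      (ENNReal.ofReal |(b ^ n)⁻¹| * volume Ub))) := by
  have hind : ∀ (U : Set (Euc n)) (y ξ : Euc n) (r : ℝ), (φ (y, ξ) ≠ 0 → y + r • ξ ∈ U) →
      φ (y, ξ) ≤ U.indicator 1 (y + r • ξ) := by
    intro U y ξ r h
    by_cases h' : φ (y, ξ) = 0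
    · simp [h']
    · rw [Set.indicator_of_mem (h h')]; exact hφ1 _
  have hc2 : (1 - t₂ / t₁) ≠ 0 := by
    intro h
    field_simp at h
    exact h12 (by linarith)
  set i2 : Euc n → ℝ≥0∞ := U2.indicator 1 with hi2
  set ib : Euc n → ℝ≥0∞ := Ub.indicator 1 with hib
  set is : Euc n → ℝ≥0∞ := Us.indicator 1 with his
  have mi2 : Measurable i2 := measurable_one.indicator m2
  have mib : Measurable ib := measurable_one.indicator mb
  have mis : Measurable is := measurable_one.indicator ms
  set lam : ℝ := (s⁻¹ - t₁⁻¹) / (t₂⁻¹ - t₁⁻¹) with hlam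
  set R : Euc n → (Euc n × Euc n) × Euc n → ℝ≥0∞ := fun y' x =>
    (i2 (t₂ • x.1.1 + (1 - t₂ / t₁) • x.2) * ib (b • x.1.2 + (1 - b / a) • x.2)) *
    (is (s • x.1.1 + (1 - s / t₁) • y') * φ (y', x.1.2 - a⁻¹ • y')) with hR
  have hd : t₂⁻¹ - t₁⁻¹ ≠ 0 := by
    intro h
    exact h12 (inv_injective (by linarith : t₁⁻¹ = t₂⁻¹))
  calc _ ≤ ∫⁻ y' : Euc n, ∫⁻ x : (Euc n × Euc n) × Euc n, R y' x := by
        apply lintegral_mono; intro y'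
        apply lintegral_mono; intro x
        simp only [hR]
        gcongr
        · refine (hind U2 _ _ t₂ (h2 _ _)).trans (le_of_eq ?_)
          congr 1
          module
        · refine (hind Ub _ _ b (hb _ _)).trans (le_of_eq ?_)
          congr 1
          module
        · refine (hind Us _ _ s (hs _ _)).trans (le_of_eq ?_)
          congr 1
          module
    _ = ∫⁻ y' : Euc n, ∫⁻ x : (Euc n × Euc n) × Euc n,
          R y' (x + ((-(s⁻¹ - t₁⁻¹) • y', a⁻¹ • y'), lam • y')) := by
        have i1 : (volume : Measure (Euc n × Euc n)).IsAddRightInvariant :=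
          Measure.prod.instIsAddRightInvariant (μ := volume) (ν := volume)
        have i3 : (volume : Measure ((Euc n × Euc n) × Euc n)).IsAddRightInvariant :=
          Measure.prod.instIsAddRightInvariant (μ := (volume : Measure (Euc n × Euc n)))
            (ν := volume)
        congr 1
        funext y'
        exact (lintegral_add_right_eq_self (R y') _).symm
    _ = ∫⁻ y' : Euc n, ∫⁻ x : (Euc n × Euc n) × Euc n,
          (i2 (t₂ • x.1.1 + (1 - t₂ / t₁) • x.2) * ib (b • x.1.2 + (1 - b / a) • x.2) *
           is (s • x.1.1)) * φ (y', x.1.2) := by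
        congr 1
        funext y'
        congr 1
        funext x
        simp only [hR, Prod.fst_add, Prod.snd_add]
        have k2 : t₂ * (-(s⁻¹ - t₁⁻¹)) + (1 - t₂ / t₁) * lam = 0 := by
          have : (1 - t₂ / t₁) = t₂ * (t₂⁻¹ - t₁⁻¹) := by field_simp
          rw [this, hlam, mul_assoc, mul_div_cancel₀ _ hd]; ring
        have kb : b * a⁻¹ + (1 - b / a) * lam = 0 := by
          rw [hlam]
          have hd' : t₁ - t₂ ≠ 0 := sub_ne_zero.mpr h12
          have hdd : t₂⁻¹ - t₁⁻¹ = (t₁ - t₂) / (t₁ * t₂) := by field_simp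
          rw [hdd]
          field_simp at hrel ⊢
          linear_combination hrel
        have ks : s * (-(s⁻¹ - t₁⁻¹)) + (1 - s / t₁) = 0 := by
          field_simp; ring
        have g2 : t₂ • (x.1.1 + -(s⁻¹ - t₁⁻¹) • y') + (1 - t₂ / t₁) • (x.2 + lam • y')
            = t₂ • x.1.1 + (1 - t₂ / t₁) • x.2 := by
          calc _ = t₂ • x.1.1 + (1 - t₂ / t₁) • x.2 +
                (t₂ * (-(s⁻¹ - t₁⁻¹)) + (1 - t₂ / t₁) * lam) • y' := by module
            _ = _ := by rw [k2, zero_smul, add_zero]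
        have gb : b • (x.1.2 + a⁻¹ • y') + (1 - b / a) • (x.2 + lam • y')
            = b • x.1.2 + (1 - b / a) • x.2 := by
          calc _ = b • x.1.2 + (1 - b / a) • x.2 +
                (b * a⁻¹ + (1 - b / a) * lam) • y' := by module
            _ = _ := by rw [kb, zero_smul, add_zero]
        have gs : s • (x.1.1 + -(s⁻¹ - t₁⁻¹) • y') + (1 - s / t₁) • y' = s • x.1.1 := by
          calc _ = s • x.1.1 + (s * (-(s⁻¹ - t₁⁻¹)) + (1 - s / t₁)) • y' := by module
            _ = _ := by rw [ks, zero_smul, add_zero]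
        rw [g2, gb, gs, add_sub_cancel_right, mul_assoc, mul_assoc, mul_assoc]
    _ = ∫⁻ x : (Euc n × Euc n) × Euc n, ∫⁻ y' : Euc n, 
          (i2 (t₂ • x.1.1 + (1 - t₂ / t₁) • x.2) * ib (b • x.1.2 + (1 - b / a) • x.2) *
           is (s • x.1.1)) * φ (y', x.1.2) := by
        apply lintegral_lintegral_swap
        apply Measurable.aemeasurable
        simp only [Function.uncurry_def]
        fun_prop
    _ ≤ ∫⁻ x : (Euc n × Euc n) × Euc n, m *
          (is (s • x.1.1) * (i2 (t₂ • x.1.1 + (1 - t₂ / t₁) • x.2) *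
            ib (b • x.1.2 + (1 - b / a) • x.2))) := by
        apply lintegral_mono
        intro x
        simp only
        rw [lintegral_const_mul _ (by fun_prop), mul_comm]
        refine mul_le_mul' (hm _) (le_of_eq (by ring))
    _ = m * ∫⁻ w, is (s • w) * ∫⁻ u, i2 (t₂ • w + (1 - t₂ / t₁) • u) *
            ∫⁻ z, ib (b • z + (1 - b / a) • u) := by
        rw [lintegral_const_mul _ (by fun_prop)]
        congr 1
        rw [show (volume : Measure ((Euc n × Euc n) × Euc n)) = volume.prod volume from rfl,
          lintegral_prod _ (by fun_prop),
          show (volume : Measure (Euc n × Euc n)) = volume.prod volume from rfl,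
          lintegral_prod _ (by
            apply Measurable.aemeasurable
            apply Measurable.lintegral_prod_right' (f := fun q : (Euc n × Euc n) × Euc n =>
              is (s • q.1.1) * (i2 (t₂ • q.1.1 + (1 - t₂ / t₁) • q.2) *
            ib (b • q.1.2 + (1 - b / a) • q.2)))
            fun_prop)]
        congr 1
        funext w
        simp only
        rw [lintegral_lintegral_swap (by
          apply Measurable.aemeasurable
          simp only [Function.uncurry_def]
          fun_prop)]
        simp_rw [← mul_assoc]
        rw [← lintegral_const_mul _ (by
          apply Measurable.mul
          · fun_prop
          · apply Measurable.lintegral_prod_right' (f := fun q : Euc n × Euc n =>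
              ib (b • q.2 + (1 - b / a) • q.1))
            fun_prop)]
        congr 1
        funext u
        rw [lintegral_const_mul _ (by fun_prop), mul_assoc]
    _ = _ := by
        congr 1
        have E1 : ∀ u, ∫⁻ z, ib (b • z + (1 - b / a) • u) =
            ENNReal.ofReal |(b ^ n)⁻¹| * volume Ub := fun u => scale_aux b nb _ Ub mb
        simp_rw [E1]
        have E2 : ∀ w, ∫⁻ u, i2 (t₂ • w + (1 - t₂ / t₁) • u) =
            ENNReal.ofReal |((1 - t₂ / t₁) ^ n)⁻¹| * volume U2 := fun w => by
          rw [← scale_aux (1 - t₂ / t₁) hc2 (t₂ • w) U2 m2]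
          simp_rw [add_comm (t₂ • w)]
          rfl
        have E2' : ∀ w, ∫⁻ u, i2 (t₂ • w + (1 - t₂ / t₁) • u) *
             (ENNReal.ofReal |(b ^ n)⁻¹| * volume Ub) =
            ENNReal.ofReal |((1 - t₂ / t₁) ^ n)⁻¹| * volume U2 *
              (ENNReal.ofReal |(b ^ n)⁻¹| * volume Ub) := fun w => by
          rw [lintegral_mul_const _ (by fun_prop), E2]
        simp_rw [E2']
        rw [lintegral_mul_const _ (by fun_prop)]
        congr 1
        have := scale_aux s ns 0 Us ms
        simpa using this

theorem dcoef_eq (d : ℕ) (hd : 2 ≤ d) (t t' : ℝ) (h : t ≠ t') :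
    Dcoef d t t' = ENNReal.ofReal |((t - t') ^ (d - 1))⁻¹| := by
  unfold Dcoef
  have hp : 0 < |t - t'| := abs_pos.mpr (sub_ne_zero.mpr h)
  rw [ENNReal.ofReal_rpow_of_pos hp, Real.rpow_neg hp.le, abs_inv, abs_pow,
    show ((d : ℝ) - 1) = ((d - 1 : ℕ) : ℝ) by push_cast [Nat.cast_sub (by omega : 1 ≤ d)]; ring,
    Real.rpow_natCast]

theorem core {n : ℕ} (H : Set (Euc n × Euc n)) (hH : MeasurableSet H)
    (t₁ a t₂ b s : ℝ) (n1 : t₁ ≠ 0) (na : a ≠ 0) (n2 : t₂ ≠ 0) (nb : b ≠ 0) (ns : s ≠ 0)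
    (h12 : t₁ ≠ t₂) (hrel : (1 - s / t₁) * a = (1 - s / t₂) * b)
    (m N : ℝ≥0∞) (hm : ∀ ξ, volume {y | (y, ξ) ∈ H} ≤ m) (U : ℝ → Set (Euc n))
    (hU : ∀ t, MeasurableSet (U t)) (hHU : ∀ t y ξ, (y, ξ) ∈ H → y + t • ξ ∈ U t)
    (hN : ∀ t ∈ ({s, 0, t₁, a, t₂, b} : Set ℝ), volume (U t) ≤ N) :
    volume H ^ 4 ≤ ENNReal.ofReal |((t₁ - t₂) ^ n)⁻¹| * ENNReal.ofReal |(s ^ n)⁻¹| *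
      ENNReal.ofReal |(a ^ n)⁻¹| * ENNReal.ofReal |(b ^ n)⁻¹| * m * N ^ 7 := by
  set φ : Euc n × Euc n → ℝ≥0∞ := H.indicator 1 with hφ
  have mφ : Measurable φ := measurable_one.indicator hH
  have hmem : ∀ y ξ, φ (y, ξ) ≠ 0 → (y, ξ) ∈ H := fun y ξ h => Set.mem_of_indicator_ne_zero h
  have vol : ∫⁻ z, φ z = volume H := lintegral_indicator_one hH
  have key : ∀ r : ℝ, r ≠ 0 → volume ((fun x : Euc n => r • x) ⁻¹' U r) =
      ENNReal.ofReal |(r ^ n)⁻¹| * volume (U r) := fun r hr => by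
    rw [Measure.addHaar_preimage_smul _ hr]; simp
  have kmem : ∀ r : ℝ, r ≠ 0 → ∀ y ξ, φ (y, ξ) ≠ 0 →
      ξ + r⁻¹ • y ∈ ((fun x : Euc n => r • x) ⁻¹' U r) := fun r hr y ξ h => by
    have := hHU r y ξ (hmem y ξ h)
    simp only [Set.mem_preimage, smul_add, smul_smul, mul_inv_cancel₀ hr, one_smul]
    rwa [add_comm]
  have A := partA φ mφ t₁⁻¹ a⁻¹ (U 0) _ _ (hU 0) (measurable_const_smul t₁ (hU t₁))
    (measurable_const_smul a (hU a))
    (fun y ξ h => by simpa using hHU 0 y ξ (hmem y ξ h)) (kmem t₁ n1) (kmem a na)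
  have B := partB φ mφ (fun z => Set.indicator_le_self' (by simp) z) m (fun ξ => by
      rw [show (fun y => φ (y, ξ)) = {y | (y, ξ) ∈ H}.indicator 1 from rfl,
        lintegral_indicator_one (show MeasurableSet {y | (y, ξ) ∈ H} from measurable_prodMk_right hH)]
      exact hm ξ)
    t₁ a t₂ b s n1 na n2 nb ns h12 hrel (U t₂) (U b) (U s) (hU _) (hU _) (hU _)
    (fun y ξ h => hHU _ y ξ (hmem y ξ h)) (fun y ξ h => hHU _ y ξ (hmem y ξ h))
    (fun y ξ h => hHU _ y ξ (hmem y ξ h))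
  rw [vol, key _ n1, key _ na] at A
  have hc : ENNReal.ofReal |((t₁ - t₂) ^ n)⁻¹| =
      ENNReal.ofReal |(t₁ ^ n)⁻¹| * ENNReal.ofReal |((1 - t₂ / t₁) ^ n)⁻¹| := by
    rw [← ENNReal.ofReal_mul (abs_nonneg _), ← abs_mul, ← mul_inv, ← mul_pow]
    congr 5
    field_simp
  rw [hc]
  refine A.trans ((mul_le_mul_right B _).trans ?_)
  have u0 := hN 0 (by simp)
  have u1 := hN t₁ (by simp)
  have ua := hN a (by simp)
  have u2 := hN t₂ (by simp)
  have ub := hN b (by simp)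
  have us := hN s (by simp)
  refine le_trans (b := N ^ 2 * (ENNReal.ofReal |(t₁ ^ n)⁻¹| * N * (ENNReal.ofReal |(a ^ n)⁻¹| * N)) *
    (m * (ENNReal.ofReal |(s ^ n)⁻¹| * N * (ENNReal.ofReal |((1 - t₂ / t₁) ^ n)⁻¹| * N *
      (ENNReal.ofReal |(b ^ n)⁻¹| * N))))) (by gcongr) (le_of_eq (by ring))

theorem statement13 (d : ℕ) (hd : 2 ≤ d) :
    ∃ K : ℝ, 0 < K ∧
      ∀ t₁ t₁' t₂ t₂' t₀ tinf : ℝ,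
        t₁ ≠ t₂ →
        t₀ ≠ tinf → t₀ ≠ t₁ → t₀ ≠ t₁' → t₀ ≠ t₂ → t₀ ≠ t₂' →
        tinf ≠ t₁ → tinf ≠ t₂ →
        (tinf - t₀) * (t₁ - t₀) / ((t₁ - tinf) * (t₁' - t₀)) =
          (tinf - t₀) * (t₂ - t₀) / ((t₂ - tinf) * (t₂' - t₀)) →
        ∀ G : Set (Euc (d - 1) × Euc (d - 1)), MeasurableSet G →
          volume G ≠ ⊤ → mG G ≠ ⊤ →
          (∀ t ∈ ({tinf, t₀, t₁, t₁', t₂, t₂'} : Set ℝ), volume (lineSlice G t) ≠ ⊤) →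
          volume G ^ 4 ≤
            ENNReal.ofReal K * Dcoef d t₁ t₂ * Dcoef d t₀ tinf *
              Dcoef d t₁' t₀ * Dcoef d t₂' t₀ * mG G *
              ⨆ t ∈ ({tinf, t₀, t₁, t₁', t₂, t₂'} : Set ℝ), volume (lineSlice G t) ^ 7 := by
  refine ⟨1, one_pos, ?_⟩
  intro t₁ t₁' t₂ t₂' t₀ tinf h12 h0i h01 h01' h02 h02' hi1 hi2 hrel G hG _ _ _
  obtain ⟨ts, hts, hmax⟩ := Set.exists_max_image ({tinf, t₀, t₁, t₁', t₂, t₂'} : Set ℝ)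
    (fun t => volume (lineSlice G t)) (Set.toFinite _) ⟨tinf, by simp⟩
  have hsup : volume (lineSlice G ts) ^ 7 ≤
      ⨆ t ∈ ({tinf, t₀, t₁, t₁', t₂, t₂'} : Set ℝ), volume (lineSlice G t) ^ 7 :=
    le_iSup₂ (f := fun t (_ : t ∈ ({tinf, t₀, t₁, t₁', t₂, t₂'} : Set ℝ)) =>
      volume (lineSlice G t) ^ 7) ts hts
  have e1 : t₁ - t₀ ≠ 0 := sub_ne_zero.mpr h01.symm
  have e1' : t₁' - t₀ ≠ 0 := sub_ne_zero.mpr h01'.symm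
  have e2 : t₂ - t₀ ≠ 0 := sub_ne_zero.mpr h02.symm
  have e2' : t₂' - t₀ ≠ 0 := sub_ne_zero.mpr h02'.symm
  have ei : tinf - t₀ ≠ 0 := sub_ne_zero.mpr h0i.symm
  have f1 : t₁ - tinf ≠ 0 := sub_ne_zero.mpr hi1.symm
  have f2 : t₂ - tinf ≠ 0 := sub_ne_zero.mpr hi2.symm
  set T : Euc (d - 1) × Euc (d - 1) → Euc (d - 1) × Euc (d - 1) :=
    fun z => (z.2, z.1 - t₀ • z.2) with hT
  have hTm : Measurable T := by simp only [hT]; fun_prop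
  have hH : MeasurableSet (T ⁻¹' G) := hTm hG
  have hslice : ∀ ξ, volume {y | (y, ξ) ∈ T ⁻¹' G} = volume {x | (ξ, x) ∈ G} := by
    intro ξ
    rw [← measure_preimage_add_right volume (-(t₀ • ξ)) {x | (ξ, x) ∈ G}]
    simp only [hT, Set.preimage_setOf_eq, Set.mem_preimage, sub_eq_add_neg]
  have hvol : volume (T ⁻¹' G) = volume G := by
    rw [show (volume : Measure (Euc (d - 1) × Euc (d - 1))) = volume.prod volume from rfl,
      Measure.prod_apply_symm hH, Measure.prod_apply hG]
    exact lintegral_congr hslice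
  have hrel' : (1 - (tinf - t₀) / (t₁ - t₀)) * (t₁' - t₀) =
      (1 - (tinf - t₀) / (t₂ - t₀)) * (t₂' - t₀) := by
    rw [div_eq_div_iff (mul_ne_zero f1 e1') (mul_ne_zero f2 e2')] at hrel
    have hrel2 := mul_left_cancel₀ ei (show (tinf - t₀) * ((t₁ - t₀) * ((t₂ - tinf) * (t₂' - t₀))) =
      (tinf - t₀) * ((t₂ - t₀) * ((t₁ - tinf) * (t₁' - t₀))) by linear_combination hrel)
    rw [one_sub_div e1, one_sub_div e2, div_mul_eq_mul_div, div_mul_eq_mul_div,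
      div_eq_div_iff e1 e2]
    linear_combination -hrel2
  have C := core (T ⁻¹' G) hH (t₁ - t₀) (t₁' - t₀) (t₂ - t₀) (t₂' - t₀) (tinf - t₀)
    e1 e1' e2 e2' ei (fun h => h12 (by linarith)) hrel' (mG G) (volume (lineSlice G ts))
    (fun ξ => by
      rw [hslice]
      exact le_iSup (fun ξ : Euc (d - 1) => volume {x : Euc (d - 1) | (ξ, x) ∈ G}) ξ)
    (fun t => toMeasurable volume (lineSlice G (t + t₀)))
    (fun t => measurableSet_toMeasurable _ _)
    (fun t y ξ h => by
      apply subset_toMeasurable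
      refine ⟨_, h, ?_⟩
      simp only [hT]
      module)
    (fun t ht => by
      rw [measure_toMeasurable]
      apply hmax
      simp only [Set.mem_insert_iff, Set.mem_singleton_iff] at ht ⊢
      rcases ht with h | h | h | h | h | h <;> simp [h])
  rw [hvol] at C
  rw [dcoef_eq d hd _ _ h12, dcoef_eq d hd _ _ h0i, dcoef_eq d hd _ _ h01'.symm,
    dcoef_eq d hd _ _ h02'.symm, ENNReal.ofReal_one, one_mul]
  have hsw : |((t₀ - tinf) ^ (d - 1))⁻¹| = |((tinf - t₀) ^ (d - 1))⁻¹| := by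
    rw [abs_inv, abs_inv, abs_pow, abs_pow, abs_sub_comm]
  rw [hsw]
  refine C.trans ?_
  rw [sub_sub_sub_cancel_right]
  gcongr

end
end

section
/- Let G be a set of lines as in the context, let t_0, t_∞ ∈ ℝ with t_0 ≠ t_∞, let s ∈ ℝ, and let ν_0 ∈ ℝ^{d−1}. Define G' = {(ξ,x) ∈ G_X : there exists (ξ',x') ∈ G_X with x + t_0 ξ = x' + t_0 ξ' and s(x + t_∞ ξ) + (x' + t_∞ ξ') − (x' + t_0 ξ') = ν_0}. Then the Lebesgue outer measure of G' satisfies ℒ^{2(d−1)}(G') ≤ |t_0 − t_∞|^{−(d−1)} · ℒ^{d−1}(π_{t_∞}(G)) · m(G). -/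
open MeasureTheory ENNReal

noncomputable section

lemma core_s14 {n : ℕ} (G : Set (Euc n × Euc n)) (hG : MeasurableSet G) (T : Set (Euc n))
    (hT : MeasurableSet T) (t₀ tinf : ℝ) (hc : t₀ - tinf ≠ 0) (p : Euc n → Euc n)
    (hp : Measurable p) :
    volume {w : Euc n × Euc n | w.2 + tinf • w.1 ∈ T ∧
      (p (w.2 + tinf • w.1), w.2 + t₀ • w.1 - t₀ • p (w.2 + tinf • w.1)) ∈ G}
      ≤ ENNReal.ofReal |((t₀ - tinf) ^ n)⁻¹| * volume T * mG G := by
  have h1 : MeasurableSet {w : Euc n × Euc n | w.2 + tinf • w.1 ∈ T ∧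
      (p (w.2 + tinf • w.1), w.2 + t₀ • w.1 - t₀ • p (w.2 + tinf • w.1)) ∈ G} := by
    apply MeasurableSet.inter
    · exact (show Measurable fun w : Euc n × Euc n => w.2 + tinf • w.1 by fun_prop) hT
    · exact (show Measurable fun w : Euc n × Euc n =>
        (p (w.2 + tinf • w.1), w.2 + t₀ • w.1 - t₀ • p (w.2 + tinf • w.1)) by fun_prop) hG
  have h2 : MeasurableSet {w : Euc n × Euc n | w.2 ∈ T ∧
      (p w.2, w.2 + (t₀ - tinf) • w.1 - t₀ • p w.2) ∈ G} := by
    apply MeasurableSet.inter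
    · exact (show Measurable fun w : Euc n × Euc n => w.2 by fun_prop) hT
    · exact (show Measurable fun w : Euc n × Euc n =>
        (p w.2, w.2 + (t₀ - tinf) • w.1 - t₀ • p w.2) by fun_prop) hG
  have h3 : volume {w : Euc n × Euc n | w.2 + tinf • w.1 ∈ T ∧
      (p (w.2 + tinf • w.1), w.2 + t₀ • w.1 - t₀ • p (w.2 + tinf • w.1)) ∈ G}
      = volume {w : Euc n × Euc n | w.2 ∈ T ∧
      (p w.2, w.2 + (t₀ - tinf) • w.1 - t₀ • p w.2) ∈ G} := by
    rw [Measure.volume_eq_prod, Measure.prod_apply h1, Measure.prod_apply h2]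
    congr 1
    funext ξ
    rw [← measure_preimage_add_right volume (tinf • ξ) (Prod.mk ξ ⁻¹' {w : Euc n × Euc n | w.2 ∈ T ∧
      (p w.2, w.2 + (t₀ - tinf) • w.1 - t₀ • p w.2) ∈ G})]
    congr 1
    ext x
    have : x + tinf • ξ + (t₀ - tinf) • ξ = x + t₀ • ξ := by module
    simp [this]
  rw [h3, Measure.volume_eq_prod, Measure.prod_apply_symm h2]
  calc _ ≤ ∫⁻ y, T.indicator (fun _ => ENNReal.ofReal |((t₀ - tinf) ^ n)⁻¹| * mG G) y := by
        apply lintegral_mono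
        intro y
        by_cases hy : y ∈ T
        · simp only [Set.indicator_of_mem hy]
          have e : ((fun x => (x, y)) ⁻¹' {w : Euc n × Euc n | w.2 ∈ T ∧
              (p w.2, w.2 + (t₀ - tinf) • w.1 - t₀ • p w.2) ∈ G})
              = ((t₀ - tinf) • ·) ⁻¹' ((· + (y - t₀ • p y)) ⁻¹' {x | (p y, x) ∈ G}) := by
            ext ξ
            have : y + (t₀ - tinf) • ξ - t₀ • p y = (t₀ - tinf) • ξ + (y - t₀ • p y) := by module
            simp [hy, this]
          rw [e, Measure.addHaar_preimage_smul _ hc, measure_preimage_add_right]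
          rw [finrank_euclideanSpace_fin]
          gcongr
          exact le_iSup (fun ξ : Euc n => volume {x : Euc n | (ξ, x) ∈ G}) (p y)
        · simp [hy]
    _ = _ := by rw [lintegral_indicator_const hT]; ring

/-- The upper bound `|G_{ν₀}| ≤ |t₀ - t∞|^{-(d-1)} ℒ^{d-1}(π_{t∞}(G)) m(G)` for the
fiber of the map `ν` over `ν₀`. -/
theorem statement14 (d : ℕ) (hd : 2 ≤ d) (G : Set (Euc (d - 1) × Euc (d - 1)))
    (hG : MeasurableSet G) (hGfin : volume G ≠ ⊤) (hmfin : mG G ≠ ⊤)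
    (t₀ tinf : ℝ) (ht : t₀ ≠ tinf) (hslice : volume (lineSlice G tinf) ≠ ⊤)
    (s : ℝ) (ν₀ : Euc (d - 1)) :
    volume {w : Euc (d - 1) × Euc (d - 1) | w ∈ G ∧
        ∃ w' ∈ G, w.2 + t₀ • w.1 = w'.2 + t₀ • w'.1 ∧
          s • (w.2 + tinf • w.1) + (w'.2 + tinf • w'.1) - (w'.2 + t₀ • w'.1) = ν₀}
      ≤ ENNReal.ofReal (|t₀ - tinf| ^ (-(((d:ℝ) - 1)))) *
          volume (lineSlice G tinf) * mG G := by
  have hc : t₀ - tinf ≠ 0 := sub_ne_zero.mpr ht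
  have key := core_s14 G hG (toMeasurable volume (lineSlice G tinf)) (measurableSet_toMeasurable _ _)
    t₀ tinf hc (fun y => (tinf - t₀)⁻¹ • (ν₀ - s • y)) (by fun_prop)
  rw [measure_toMeasurable] at key
  have hr : |((t₀ - tinf) ^ (d - 1))⁻¹| = |t₀ - tinf| ^ (-(((d:ℝ) - 1))) := by
    rw [Real.rpow_neg (abs_nonneg _), abs_inv, abs_pow, ← Real.rpow_natCast,
      Nat.cast_sub (by omega), Nat.cast_one]
  rw [hr] at key
  refine le_trans (measure_mono ?_) key
  rintro w ⟨hw, w', hw', h1, h2⟩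
  refine ⟨subset_toMeasurable _ _ ⟨w, hw, rfl⟩, ?_⟩
  have e : (tinf - t₀)⁻¹ • (ν₀ - s • (w.2 + tinf • w.1)) = w'.1 := by
    have : ν₀ - s • (w.2 + tinf • w.1) = (tinf - t₀) • w'.1 := by
      rw [← h2]; module
    rw [this, inv_smul_smul₀ (sub_ne_zero.mpr ht.symm)]
  simp only [e, h1]
  simpa using hw'

end
end

section
/- There exist absolute constants C₀ > 0 and c₁, c₂, c₃, c₄ ∈ (0,1] such that the following holds for every Lebesgue measurable set I ⊆ [0,1]. For (t_0, t_∞, s) ∈ I × I × ℝ define Ĩ_{t_0,t_∞,s} = {t ∈ I : s ≠ 0, t ≠ t_∞, u_{t_0,t_∞}(t,s) ∈ I, and |t̃ − t̂| ≥ c₁ ℒ¹(I) for every t̃ ∈ {t, u_{t_0,t_∞}(t,s)} and every t̂ ∈ {t_0, t_∞}}, where u_{t_0,t_∞}(t,s) = t_0 + (t_∞ − t_0)(t − t_0)/(s(t − t_∞)). Define 𝒫(I) = {(t_0, t_∞, s) ∈ I × I × [−C₀ ℒ¹(I)^{−2}, C₀ ℒ¹(I)^{−2}] : |t_0 − t_∞|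 ≥ c₂ ℒ¹(I) and ℒ¹(Ĩ_{t_0,t_∞,s}) ≥ c₃ ℒ¹(I)^6}. Then ∫_{𝒫(I)} ℒ¹(Ĩ_y) dy ≥ c₄ ℒ¹(I)^6. -/
open MeasureTheory ENNReal

noncomputable section

/-- `u_{t₀,t∞}(t,s) = t₀ + (t∞ - t₀)(t - t₀)/(s (t - t∞))`. -/
def uu (t₀ tinf t s : ℝ) : ℝ := t₀ + (tinf - t₀) * (t - t₀) / (s * (t - tinf))

/-- `Ĩ_{t₀,t∞,s}`: the set of `t ∈ I` such that `u_{t₀,t∞}(t,s) ∈ I` and both `t`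
and `u_{t₀,t∞}(t,s)` are `≥ c₁ ℒ¹(I)`-separated from `t₀` and `t∞`. -/
def Itilde (c₁ : ℝ) (I : Set ℝ) (t₀ tinf s : ℝ) : Set ℝ :=
  {t ∈ I | s ≠ 0 ∧ t ≠ tinf ∧ uu t₀ tinf t s ∈ I ∧
    ∀ ta ∈ ({t, uu t₀ tinf t s} : Set ℝ), ∀ tb ∈ ({t₀, tinf} : Set ℝ),
      c₁ * (volume I).toReal ≤ |ta - tb|}

/-- `𝒫(I)`: the set of favorable parameters `(t₀, t∞, s)`. -/
def Pset (C₀ c₁ c₂ c₃ : ℝ) (I : Set ℝ) : Set (ℝ × ℝ × ℝ) :=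
  {y | y.1 ∈ I ∧ y.2.1 ∈ I ∧
    y.2.2 ∈ Set.Icc (-(C₀ * (volume I).toReal ^ (-2 : ℤ))) (C₀ * (volume I).toReal ^ (-2 : ℤ)) ∧
    c₂ * (volume I).toReal ≤ |y.1 - y.2.1| ∧
    ENNReal.ofReal (c₃ * (volume I).toReal ^ 6) ≤ volume (Itilde c₁ I y.1 y.2.1 y.2.2)}

lemma measE (c : ℝ) (I : Set ℝ) (hI : MeasurableSet I) :
    MeasurableSet {p : (ℝ × ℝ × ℝ) × ℝ | p.2 ∈ Itilde c I p.1.1 p.1.2.1 p.1.2.2} := by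
  have hu : Measurable (fun p : (ℝ × ℝ × ℝ) × ℝ => uu p.1.1 p.1.2.1 p.2 p.1.2.2) := by
    unfold uu
    fun_prop
  have e : {p : (ℝ × ℝ × ℝ) × ℝ | p.2 ∈ Itilde c I p.1.1 p.1.2.1 p.1.2.2} =
      {p | p.2 ∈ I} ∩ ({p | p.1.2.2 ≠ 0} ∩ ({p | p.2 ≠ p.1.2.1} ∩
      ({p | uu p.1.1 p.1.2.1 p.2 p.1.2.2 ∈ I} ∩
      (({p | c * (volume I).toReal ≤ |p.2 - p.1.1|} ∩
        {p | c * (volume I).toReal ≤ |p.2 - p.1.2.1|}) ∩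
       ({p | c * (volume I).toReal ≤ |uu p.1.1 p.1.2.1 p.2 p.1.2.2 - p.1.1|} ∩
        {p | c * (volume I).toReal ≤ |uu p.1.1 p.1.2.1 p.2 p.1.2.2 - p.1.2.1|}))))) := by
    ext p
    simp [Itilde]
    tauto
  rw [e]
  refine (measurable_snd hI).inter (MeasurableSet.inter ?_ (MeasurableSet.inter ?_
    ((hu hI).inter (MeasurableSet.inter (MeasurableSet.inter ?_ ?_)
      (MeasurableSet.inter ?_ ?_)))))
  · exact (measurableSet_eq_fun (by fun_prop) (by fun_prop)).compl
  · exact (measurableSet_eq_fun (by fun_prop) (by fun_prop)).compl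
  · exact measurableSet_le (by fun_prop) (continuous_abs.measurable.comp (by fun_prop))
  · exact measurableSet_le (by fun_prop) (continuous_abs.measurable.comp (by fun_prop))
  · exact measurableSet_le (by fun_prop) (continuous_abs.measurable.comp
      (hu.sub (by fun_prop)))
  · exact measurableSet_le (by fun_prop) (continuous_abs.measurable.comp
      (hu.sub (by fun_prop)))

def SepSet (I : Set ℝ) (a b : ℝ) : Set ℝ :=
  {u ∈ I | 1/8 * (volume I).toReal ≤ |u - a| ∧ 1/8 * (volume I).toReal ≤ |u - b|}

lemma measSep (I : Set ℝ) (hI : MeasurableSet I) (a b : ℝ) : MeasurableSet (SepSet I a b) := by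
  have e : SepSet I a b = I ∩ ({u | 1/8 * (volume I).toReal ≤ |u - a|} ∩
    {u | 1/8 * (volume I).toReal ≤ |u - b|}) := by
    ext; simp [SepSet]; tauto
  rw [e]
  exact hI.inter (MeasurableSet.inter
    (measurableSet_le (by fun_prop) (continuous_abs.measurable.comp (by fun_prop)))
    (measurableSet_le (by fun_prop) (continuous_abs.measurable.comp (by fun_prop))))

lemma volSep (I : Set ℝ) (hI : volume I ≠ ∞) (a b : ℝ) :
    ENNReal.ofReal ((volume I).toReal / 2) ≤ volume (SepSet I a b) := by
  have hm : 0 ≤ (volume I).toReal := ENNReal.toReal_nonneg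
  have hsub : I ⊆ SepSet I a b ∪ (Metric.ball a (1/8 * (volume I).toReal) ∪
      Metric.ball b (1/8 * (volume I).toReal)) := by
    intro u hu
    by_cases h1 : 1/8 * (volume I).toReal ≤ |u - a|
    · by_cases h2 : 1/8 * (volume I).toReal ≤ |u - b|
      · exact Or.inl ⟨hu, h1, h2⟩
      · right; right; simpa [Real.dist_eq] using h2
    · right; left; simpa [Real.dist_eq] using h1
  have h := (measure_mono (μ := volume) hsub).trans ((measure_union_le _ _).trans
    (add_le_add_right (measure_union_le _ _) _) )
  rw [Real.volume_ball, Real.volume_ball, ← ENNReal.ofReal_add (by positivity) (by positivity)]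
    at h
  generalize hX : volume (SepSet I a b) = X at h ⊢
  have e : volume I = ENNReal.ofReal ((volume I).toReal / 2) +
      ENNReal.ofReal (2 * (1/8 * (volume I).toReal) + 2 * (1/8 * (volume I).toReal)) := by
    rw [← ENNReal.ofReal_add (by positivity) (by positivity)]
    conv_lhs => rw [← ENNReal.ofReal_toReal hI]
    congr 1; ring
  conv at h => lhs; rw [e]
  exact (ENNReal.add_le_add_iff_right ENNReal.ofReal_ne_top).1 h

def Bd (I : Set ℝ) : ℝ := 64 * (volume I).toReal ^ (-2 : ℤ)

lemma sliceS (I : Set ℝ) (hI : MeasurableSet I) (h01 : I ⊆ Set.Icc (0:ℝ) 1)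
    (hm : 0 < (volume I).toReal) (hfin : volume I ≠ ∞)
    (t₀ tinf t : ℝ) (h0 : t₀ ∈ I) (hinf : tinf ∈ I)
    (hsep : 1/8 * (volume I).toReal ≤ |t₀ - tinf|) (ht : t ∈ SepSet I t₀ tinf) :
    ENNReal.ofReal ((volume I).toReal ^ 3 / 128) ≤
      volume {s | s ∈ Set.Icc (-Bd I) (Bd I) ∧ t ∈ Itilde (1/8) I t₀ tinf s} := by
  obtain ⟨htI, ht0, htinf⟩ := ht
  set m := (volume I).toReal with hmdef
  set K : ℝ := (tinf - t₀) * (t - t₀) / (t - tinf) with hK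
  have p1 : t - t₀ ≠ 0 := by
    intro h; rw [h, abs_zero] at ht0; linarith
  have p2 : t - tinf ≠ 0 := by
    intro h; rw [h, abs_zero] at htinf; linarith
  have p3 : tinf - t₀ ≠ 0 := by
    intro h; rw [abs_sub_comm, h, abs_zero] at hsep; linarith
  have hle : ∀ x ∈ I, ∀ y ∈ I, |x - y| ≤ 1 := by
    intro x hx y hy
    have := h01 hx; have := h01 hy
    simp only [Set.mem_Icc] at *
    rw [abs_le]; constructor <;> linarith
  have hK0 : K ≠ 0 := by
    rw [hK]; positivity
  have hKabs : |K| = |tinf - t₀| * |t - t₀| / |t - tinf| := by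
    rw [hK, abs_div, abs_mul]
  have hKlow : m ^ 2 / 64 ≤ |K| := by
    rw [hKabs, le_div_iff₀ (abs_pos.2 p2)]
    have a1 := hle t htI tinf hinf
    rw [abs_sub_comm] at hsep
    have : (1/8*m) * (1/8*m) ≤ |tinf - t₀| * |t - t₀| := by gcongr
    nlinarith [sq_nonneg m]
  have hKup : |K| ≤ 8 / m := by
    rw [hKabs, div_le_div_iff₀ (abs_pos.2 p2) hm]
    have a1 := hle tinf hinf t₀ h0
    have a2 := hle t htI t₀ h0
    have : |tinf - t₀| * |t - t₀| ≤ 1 * 1 := by gcongr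
    nlinarith [abs_nonneg (tinf - t₀), abs_nonneg (t - t₀)]
  set U := SepSet I t₀ tinf with hU
  have hUne : ∀ u ∈ U, u - t₀ ≠ 0 := by
    intro u hu h
    have := hu.2.1
    rw [h, abs_zero] at this; linarith
  have hsub : (fun u => K / (u - t₀)) '' U ⊆
      {s | s ∈ Set.Icc (-Bd I) (Bd I) ∧ t ∈ Itilde (1/8) I t₀ tinf s} := by
    rintro s ⟨u, hu, rfl⟩
    have hu0 := hUne u hu
    have huu : uu t₀ tinf t (K / (u - t₀)) = u := by
      rw [uu, hK]
      field_simp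
      ring
    refine ⟨?_, htI, ?_, ?_, ?_, ?_⟩
    · rw [Set.mem_Icc, ← abs_le]
      change |K / (u - t₀)| ≤ _
      rw [abs_div, div_le_iff₀ (abs_pos.2 hu0)]
      refine hKup.trans ?_
      have := hu.2.1
      have e : 8 / m = Bd I * (1/8 * m) := by
        rw [Bd, ← hmdef, zpow_neg]
        field_simp
        norm_num
      rw [e]
      have : 0 ≤ Bd I := by unfold Bd; positivity
      gcongr
    · exact div_ne_zero hK0 hu0
    · exact sub_ne_zero.1 p2
    · change uu t₀ tinf t (K / (u - t₀)) ∈ I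
      rw [huu]; exact hu.1
    · change ∀ ta ∈ ({t, uu t₀ tinf t (K / (u - t₀))} : Set ℝ), _
      rw [huu]
      rintro ta (rfl | rfl) tb (rfl | rfl)
      · exact ht0
      · exact htinf
      · exact hu.2.1
      · exact hu.2.2
  refine le_trans ?_ (measure_mono hsub)
  have hder : ∀ u ∈ U, HasDerivWithinAt (fun u => K / (u - t₀)) (-K / (u - t₀)^2) U u := by
    intro u hu
    have := ((hasDerivAt_const u K).div ((hasDerivAt_id u).sub_const t₀) (hUne u hu))
    refine (this.congr_deriv ?_).hasDerivWithinAt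
    simp
  have hinj : Set.InjOn (fun u => K / (u - t₀)) U := by
    intro x hx y hy h
    have hx0 := hUne x hx
    have hy0 := hUne y hy
    simp only at h
    rw [div_eq_div_iff hx0 hy0] at h
    have := mul_left_cancel₀ hK0 h
    linarith
  have himg := lintegral_image_eq_lintegral_abs_deriv_mul (measSep I hI t₀ tinf) hder hinj
    (fun _ => 1)
  simp only [lintegral_const, mul_one, one_mul, Measure.restrict_apply, MeasurableSet.univ,
    Set.univ_inter] at himg
  rw [himg]
  calc ENNReal.ofReal (m ^ 3 / 128) = ENNReal.ofReal (m^2/64) * ENNReal.ofReal (m / 2) := by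
        rw [← ENNReal.ofReal_mul (by positivity)]; congr 1; ring
    _ ≤ ENNReal.ofReal (m^2/64) * volume U := by
        gcongr; exact volSep I hfin t₀ tinf
    _ = ∫⁻ u in U, ENNReal.ofReal (m^2/64) := by simp
    _ ≤ _ := by
        refine setLIntegral_mono' (measSep I hI t₀ tinf) ?_
        intro u hu
        apply ENNReal.ofReal_le_ofReal
        have hu0 := hUne u hu
        rw [abs_div, abs_neg, abs_of_nonneg (sq_nonneg (u - t₀)), le_div_iff₀ (by positivity)]
        have a := hle u hu.1 t₀ h0
        have : (u - t₀)^2 ≤ 1 := by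
          rw [← sq_abs]; nlinarith [abs_nonneg (u - t₀)]
        have : m^2/64 * (u - t₀)^2 ≤ m^2/64 * 1 := by gcongr
        linarith

lemma sliceST (I : Set ℝ) (hI : MeasurableSet I) (h01 : I ⊆ Set.Icc (0:ℝ) 1)
    (hm : 0 < (volume I).toReal) (hfin : volume I ≠ ∞)
    (t₀ tinf : ℝ) (h0 : t₀ ∈ I) (hinf : tinf ∈ I)
    (hsep : 1/8 * (volume I).toReal ≤ |t₀ - tinf|) :
    ENNReal.ofReal ((volume I).toReal ^ 4 / 256) ≤
      ∫⁻ s in Set.Icc (-Bd I) (Bd I), volume (Itilde (1/8) I t₀ tinf s) := by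
  set G : Set (ℝ × ℝ) := {q | q.2 ∈ Itilde (1/8) I t₀ tinf q.1} with hG
  have hGm : MeasurableSet G := by
    have : Measurable (fun q : ℝ × ℝ => (((t₀, tinf, q.1), q.2) : (ℝ × ℝ × ℝ) × ℝ)) := by
      fun_prop
    exact this (measE (1/8) I hI)
  have e1 : ∫⁻ s in Set.Icc (-Bd I) (Bd I), volume (Itilde (1/8) I t₀ tinf s) =
      ((volume.restrict (Set.Icc (-Bd I) (Bd I))).prod volume) G := by
    rw [Measure.prod_apply hGm]
    rfl
  rw [e1, Measure.prod_apply_symm hGm]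
  set m := (volume I).toReal with hmdef
  calc ENNReal.ofReal (m ^ 4 / 256) = ENNReal.ofReal (m^3/128) * ENNReal.ofReal (m / 2) := by
        rw [← ENNReal.ofReal_mul (by positivity)]; congr 1; ring
    _ ≤ ENNReal.ofReal (m^3/128) * volume (SepSet I t₀ tinf) := by
        gcongr; exact volSep I hfin t₀ tinf
    _ = ∫⁻ u in SepSet I t₀ tinf, ENNReal.ofReal (m^3/128) := by simp
    _ ≤ ∫⁻ u in SepSet I t₀ tinf, (volume.restrict (Set.Icc (-Bd I) (Bd I)))
          ((fun x => (x, u)) ⁻¹' G) := by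
        refine setLIntegral_mono' (measSep I hI t₀ tinf) ?_
        intro t ht
        refine (sliceS I hI h01 hm hfin t₀ tinf t h0 hinf hsep ht).trans ?_
        rw [Measure.restrict_apply' measurableSet_Icc]
        exact measure_mono (fun s hs => ⟨hs.2, hs.1⟩)
    _ ≤ _ := setLIntegral_le_lintegral _ _

def Bset (I : Set ℝ) : Set (ℝ × ℝ × ℝ) :=
  {y | y.1 ∈ I ∧ y.2.1 ∈ I ∧ y.2.2 ∈ Set.Icc (-Bd I) (Bd I) ∧
    1/8 * (volume I).toReal ≤ |y.1 - y.2.1|}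

lemma measB (I : Set ℝ) (hI : MeasurableSet I) : MeasurableSet (Bset I) := by
  refine (measurable_fst hI).inter (MeasurableSet.inter
    ((measurable_fst.comp measurable_snd) hI) (MeasurableSet.inter
    ((measurable_snd.comp measurable_snd) (measurableSet_Icc (a := -Bd I) (b := Bd I))) ?_))
  exact measurableSet_le (f := fun _ : ℝ × ℝ × ℝ => 1/8 * (volume I).toReal)
    (g := fun y : ℝ × ℝ × ℝ => |y.1 - y.2.1|) measurable_const
    (continuous_abs.measurable.comp (by fun_prop))

lemma measf (I : Set ℝ) (hI : MeasurableSet I) :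
    Measurable (fun y : ℝ × ℝ × ℝ => volume (Itilde (1/8) I y.1 y.2.1 y.2.2)) :=
  measurable_measure_prodMk_left (measE (1/8) I hI)

lemma fullInt (I : Set ℝ) (hI : MeasurableSet I) (h01 : I ⊆ Set.Icc (0:ℝ) 1)
    (hm : 0 < (volume I).toReal) (hfin : volume I ≠ ∞) :
    ENNReal.ofReal ((volume I).toReal ^ 6 / 512) ≤
      ∫⁻ y in Bset I, volume (Itilde (1/8) I y.1 y.2.1 y.2.2) := by
  set f := (fun y : ℝ × ℝ × ℝ => volume (Itilde (1/8) I y.1 y.2.1 y.2.2)) with hf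
  have hfm : Measurable f := measf I hI
  have hFm : Measurable ((Bset I).indicator f) := hfm.indicator (measB I hI)
  change _ ≤ ∫⁻ y in Bset I, f y
  rw [← lintegral_indicator (measB I hI), Measure.volume_eq_prod,
    lintegral_prod _ hFm.aemeasurable]
  set m := (volume I).toReal with hmdef
  have hV : volume I = ENNReal.ofReal m := (ENNReal.ofReal_toReal hfin).symm
  calc ENNReal.ofReal (m ^ 6 / 512) = ENNReal.ofReal (m^5/512) * volume I := by
        rw [hV, ← ENNReal.ofReal_mul (by positivity)]; congr 1; ring
    _ = ∫⁻ u in I, ENNReal.ofReal (m^5/512) := by simp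
    _ ≤ ∫⁻ x in I, ∫⁻ y, (Bset I).indicator f (x, y) := by
        refine setLIntegral_mono' hI ?_
        intro t₀ h0
        rw [Measure.volume_eq_prod,
          lintegral_prod (fun y => (Bset I).indicator f (t₀, y))
            (hFm.comp measurable_prodMk_left).aemeasurable]
        calc ENNReal.ofReal (m ^ 5 / 512)
            = ENNReal.ofReal (m^4/256) * ENNReal.ofReal (m / 2) := by
              rw [← ENNReal.ofReal_mul (by positivity)]; congr 1; ring
          _ ≤ ENNReal.ofReal (m^4/256) * volume (SepSet I t₀ t₀) := by
              gcongr; exact volSep I hfin t₀ t₀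
          _ = ∫⁻ u in SepSet I t₀ t₀, ENNReal.ofReal (m^4/256) := by simp
          _ ≤ ∫⁻ tinf in SepSet I t₀ t₀, ∫⁻ s, (Bset I).indicator f (t₀, tinf, s) := by
              refine setLIntegral_mono' (measSep I hI t₀ t₀) ?_
              intro tinf hinf
              have hs : 1/8 * m ≤ |t₀ - tinf| := by
                rw [abs_sub_comm]; exact hinf.2.1
              refine (sliceST I hI h01 hm hfin t₀ tinf h0 hinf.1 hs).trans ?_
              rw [← lintegral_indicator measurableSet_Icc]
              refine lintegral_mono ?_
              intro s
              by_cases hsI : s ∈ Set.Icc (-Bd I) (Bd I)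
              swap
              · simp only [Set.indicator_of_notMem hsI]; exact zero_le
              have : (t₀, tinf, s) ∈ Bset I := ⟨h0, hinf.1, hsI, hs⟩
              simp only [Set.indicator_of_mem this, Set.indicator_of_mem hsI]
              exact le_rfl
          _ ≤ _ := setLIntegral_le_lintegral _ _
    _ ≤ _ := setLIntegral_le_lintegral _ _

lemma volB (I : Set ℝ) (hm : 0 < (volume I).toReal) (hfin : volume I ≠ ∞) :
    volume (Bset I) ≤ ENNReal.ofReal 128 := by
  have hsub : Bset I ⊆ I ×ˢ (I ×ˢ Set.Icc (-Bd I) (Bd I)) :=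
    fun y hy => ⟨hy.1, hy.2.1, hy.2.2.1⟩
  refine (measure_mono hsub).trans ?_
  rw [Measure.volume_eq_prod, Measure.prod_prod, Measure.volume_eq_prod, Measure.prod_prod,
    Real.volume_Icc]
  conv_lhs => rw [← ENNReal.ofReal_toReal hfin]
  rw [← ENNReal.ofReal_mul (by positivity), ← ENNReal.ofReal_mul (by positivity)]
  apply ENNReal.ofReal_le_ofReal
  apply le_of_eq
  rw [Bd, zpow_neg]
  field_simp
  norm_num

/-- Claim 3 (uniformization): there are absolute constants `C₀, c₁, c₂, c₃, c₄`
such that for every measurable `I ⊆ [0,1]`,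
`∫_{𝒫(I)} ℒ¹(Ĩ_y) dy ≥ c₄ ℒ¹(I)⁶`. -/
theorem statement17 :
    ∃ C₀ : ℝ, 0 < C₀ ∧
    ∃ c₁ ∈ Set.Ioc (0:ℝ) 1, ∃ c₂ ∈ Set.Ioc (0:ℝ) 1,
    ∃ c₃ ∈ Set.Ioc (0:ℝ) 1, ∃ c₄ ∈ Set.Ioc (0:ℝ) 1,
      ∀ I : Set ℝ, I ⊆ Set.Icc (0:ℝ) 1 → MeasurableSet I →
        ENNReal.ofReal (c₄ * (volume I).toReal ^ 6) ≤
          ∫⁻ y in Pset C₀ c₁ c₂ c₃ I, volume (Itilde c₁ I y.1 y.2.1 y.2.2) := by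
  refine ⟨64, by norm_num, 1/8, by norm_num, 1/8, by norm_num, 1/131072, by norm_num,
    1/1024, by norm_num, ?_⟩
  intro I h01 hI
  have hfin : volume I ≠ ∞ := by
    refine ne_top_of_le_ne_top ?_ (measure_mono h01)
    simp
  rcases (ENNReal.toReal_nonneg (a := volume I)).eq_or_lt with h | hm
  · rw [← h]; simp
  set f := (fun y : ℝ × ℝ × ℝ => volume (Itilde (1/8) I y.1 y.2.1 y.2.2)) with hf
  have hfm : Measurable f := measf I hI
  set ε := ENNReal.ofReal (1/131072 * (volume I).toReal ^ 6) with hε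
  have hP : Pset 64 (1/8) (1/8) (1/131072) I = Bset I ∩ {y | ε ≤ f y} := by
    ext y
    simp only [Pset, Bset, Bd, Set.mem_inter_iff, Set.mem_ofPred_eq, and_assoc, hf, hε]
  have hTm : MeasurableSet {y | ε ≤ f y} := measurableSet_le measurable_const hfm
  have hfull : _ ≤ ∫⁻ y in Bset I, f y := fullInt I hI h01 hm hfin
  rw [← lintegral_inter_add_sdiff f (Bset I) hTm, ← hP] at hfull
  have hsmall : ∫⁻ y in Bset I \ {y | ε ≤ f y}, f y ≤
      ENNReal.ofReal ((volume I).toReal ^ 6 / 1024) := by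
    calc ∫⁻ y in Bset I \ {y | ε ≤ f y}, f y ≤ ∫⁻ y in Bset I \ {y | ε ≤ f y}, ε := by
          refine setLIntegral_mono' ((measB I hI).diff hTm) ?_
          intro y hy
          exact (not_le.1 hy.2).le
      _ = ε * volume (Bset I \ {y | ε ≤ f y}) := by simp
      _ ≤ ε * ENNReal.ofReal 128 := by
          gcongr
          exact (measure_mono Set.sdiff_subset).trans (volB I hm hfin)
      _ = _ := by
          rw [hε, ← ENNReal.ofReal_mul (by positivity)]; congr 1; ring
  have h2 := hfull.trans (add_le_add_right hsmall _)
  have e : (volume I).toReal ^ 6 / 512 = 1/1024 * (volume I).toReal ^ 6 +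
      (volume I).toReal ^ 6 / 1024 := by ring
  rw [e, ENNReal.ofReal_add (by positivity) (by positivity)] at h2
  exact (ENNReal.add_le_add_iff_right ENNReal.ofReal_ne_top).1 h2


end
end

section
/- Define real sequences by α_1 = 1, β_1 = 0, k_1 = 2 and α_{i+1} = 2k_i, β_{i+1} = β_i + k_i − α_i, k_{i+1} = 4k_i − α_i for i ≥ 1. Then: (a) for all i ≥ 2, k_{i+1} = 4k_i − 2k_{i−1} and β_{i+1} = 2k_{i−1}; (b) α_i − β_i > 0 for all i; (c) k_{i+1}/k_i converges to 2 + √2 as i → ∞; (d) k_i/(α_i − β_i) converges to 1 + √2 as i → ∞; and (e) k_i/α_i converges to 1 + (√2)/2 as i → ∞. -/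
open Filter

noncomputable section

/-- The triple `(α_{n+1}, β_{n+1}, k_{n+1})` of exponents: `(α₁,β₁,k₁) = (1,0,2)`
and `(α_{i+1}, β_{i+1}, k_{i+1}) = (2k_i, β_i + k_i - α_i, 4k_i - α_i)`. -/
def abk : ℕ → ℝ × ℝ × ℝ
  | 0 => (1, 0, 2)
  | n + 1 => (2 * (abk n).2.2, (abk n).2.1 + (abk n).2.2 - (abk n).1,
      4 * (abk n).2.2 - (abk n).1)

/-- `α_i` (for `i ≥ 1`). -/
def alphaS (i : ℕ) : ℝ := (abk (i - 1)).1
/-- `β_i` (for `i ≥ 1`). -/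
def betaS (i : ℕ) : ℝ := (abk (i - 1)).2.1
/-- `k_i` (for `i ≥ 1`). -/
def kS (i : ℕ) : ℝ := (abk (i - 1)).2.2

theorem abk_k_rec (n : ℕ) : (abk (n+2)).2.2 = 4 * (abk (n+1)).2.2 - 2 * (abk n).2.2 := by
  simp [abk]

theorem abk_beta (n : ℕ) : (abk (n+2)).2.1 = 2 * (abk n).2.2 := by
  induction n with
  | zero => norm_num [abk]
  | succ n ih =>
    have h1 : (abk (n+1+2)).2.1 = (abk (n+2)).2.1 + (abk (n+2)).2.2 - (abk (n+2)).1 := rfl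
    have h2 : (abk (n+2)).1 = 2 * (abk (n+1)).2.2 := rfl
    rw [h1, ih, h2, abk_k_rec]; ring

theorem abk_grow (n : ℕ) : 0 < (abk n).2.2 ∧ 2 * (abk n).2.2 ≤ (abk (n+1)).2.2 := by
  induction n with
  | zero => norm_num [abk]
  | succ n ih =>
    refine ⟨by linarith, ?_⟩
    rw [abk_k_rec]; linarith

theorem abk_ratio :
    Tendsto (fun n => (abk (n+1)).2.2 / (abk n).2.2) atTop (nhds (2 + Real.sqrt 2)) := by
  have hs : Real.sqrt 2 * Real.sqrt 2 = 2 := Real.mul_self_sqrt (by norm_num)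
  have hs1 : 1 ≤ Real.sqrt 2 := Real.one_le_sqrt.mpr (by norm_num)
  set r := 2 + Real.sqrt 2 with hr
  have hrr : r * r = 4 * r - 2 := by rw [hr]; nlinarith
  have hr3 : 3 ≤ r := by linarith
  clear_value r
  have key : ∀ n, |(abk (n+1)).2.2 / (abk n).2.2 - r| ≤
      |(abk 1).2.2 / (abk 0).2.2 - r| * (1/3 : ℝ)^n := by
    intro n
    induction n with
    | zero => simp
    | succ n ih =>
      obtain ⟨h0, h1⟩ := abk_grow n
      rw [abk_k_rec]
      generalize (abk (n+1)).2.2 = y at *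
      generalize (abk n).2.2 = x at *
      have hy : 0 < y := by linarith
      have e : (4 * y - 2 * x) / y - r = (y / x - r) * (2 * x / (y * r)) := by
        have : r ≠ 0 := by linarith
        field_simp
        linear_combination (-y) * hrr
      have hc : 2 * x / (y * r) ≤ 1 / 3 := by
        rw [div_le_div_iff₀ (by positivity) (by norm_num)]
        nlinarith
      have hc0 : 0 ≤ 2 * x / (y * r) := by positivity
      rw [e, abs_mul, abs_of_nonneg hc0, pow_succ, ← mul_assoc]
      exact mul_le_mul ih hc hc0 (by positivity)
  rw [tendsto_iff_norm_sub_tendsto_zero]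
  refine squeeze_zero (fun _ => norm_nonneg _) key ?_
  have := (tendsto_pow_atTop_nhds_zero_of_lt_one (r := (1/3:ℝ)) (by norm_num)
    (by norm_num)).const_mul |(abk 1).2.2 / (abk 0).2.2 - r|
  simpa using this

/-- Asymptotics of the exponent sequences:
(a) for `i ≥ 2`, `k_{i+1} = 4k_i - 2k_{i-1}` and `β_{i+1} = 2k_{i-1}`;
(b) `α_i - β_i > 0`;
(c) `k_{i+1}/k_i → 2 + √2`;
(d) `k_i/(α_i - β_i) → 1 + √2`;
(e) `k_i/α_i → 1 + √2/2`. -/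
theorem statement18 :
    (∀ i : ℕ, 2 ≤ i → kS (i + 1) = 4 * kS i - 2 * kS (i - 1) ∧
        betaS (i + 1) = 2 * kS (i - 1)) ∧
    (∀ i : ℕ, 1 ≤ i → 0 < alphaS i - betaS i) ∧
    Tendsto (fun i => kS (i + 1) / kS i) atTop (nhds (2 + Real.sqrt 2)) ∧
    Tendsto (fun i => kS i / (alphaS i - betaS i)) atTop (nhds (1 + Real.sqrt 2)) ∧
    Tendsto (fun i => kS i / alphaS i) atTop (nhds (1 + Real.sqrt 2 / 2)) := by
  have hs : Real.sqrt 2 * Real.sqrt 2 = 2 := Real.mul_self_sqrt (by norm_num)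
  have hs1 : 1 ≤ Real.sqrt 2 := Real.one_le_sqrt.mpr (by norm_num)
  refine ⟨?_, ?_, ?_, ?_, ?_⟩
  · intro i hi
    obtain ⟨n, rfl⟩ := Nat.exists_eq_add_of_le' hi
    exact ⟨abk_k_rec n, abk_beta n⟩
  · intro i hi
    obtain ⟨n, rfl⟩ := Nat.exists_eq_add_of_le' hi
    change 0 < (abk n).1 - (abk n).2.1
    match n with
    | 0 => norm_num [abk]
    | 1 => norm_num [abk]
    | n + 2 =>
      have h2 : (abk (n+2)).1 = 2 * (abk (n+1)).2.2 := rfl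
      obtain ⟨h0, h1⟩ := abk_grow n
      rw [h2, abk_beta]; linarith
  · rw [← tendsto_add_atTop_iff_nat 1]
    exact abk_ratio
  · rw [← tendsto_add_atTop_iff_nat 3]
    have h := ((tendsto_add_atTop_iff_nat 1).mpr abk_ratio).mul
      (abk_ratio.div ((abk_ratio.const_mul 2).sub_const 2) (by linarith))
    have e : (2 + Real.sqrt 2) * ((2 + Real.sqrt 2) / (2 * (2 + Real.sqrt 2) - 2))
        = 1 + Real.sqrt 2 := by
      have : 2 * (2 + Real.sqrt 2) - 2 ≠ 0 := by linarith
      rw [← mul_div_assoc, div_eq_iff this]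
      linear_combination (-1) * hs
    rw [e] at h
    refine h.congr (fun n => ?_)
    change _ = (abk (n+2)).2.2 / (2 * (abk (n+1)).2.2 - (abk (n+2)).2.1)
    rw [abk_beta]
    obtain ⟨h0, h1⟩ := abk_grow n
    simp only [Pi.div_apply]
    change (abk (n+2)).2.2 / (abk (n+1)).2.2 * _ = _
    generalize (abk (n+2)).2.2 = z at *
    generalize (abk (n+1)).2.2 = y at *
    generalize (abk n).2.2 = x at *
    have hy : y ≠ 0 := by linarith
    have hx : x ≠ 0 := by linarith
    have e1 : 2 * (y / x) - 2 = (2 * y - 2 * x) / x := by field_simp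
    have hd : 2 * y - 2 * x ≠ 0 := by linarith
    rw [e1]
    field_simp
  · rw [← tendsto_add_atTop_iff_nat 2]
    have h := abk_ratio.div_const 2
    have e : (2 + Real.sqrt 2) / 2 = 1 + Real.sqrt 2 / 2 := by ring
    rw [e] at h
    refine h.congr (fun n => ?_)
    change _ = (abk (n+1)).2.2 / (2 * (abk n).2.2)
    rw [div_div, mul_comm]

end
end

section
/- Let d ≥ 2 be an integer, let C > 0, let 1 ≤ p ≤ q ≤ r < ∞ with 1 + (d−1)/q > d/p, and let A > 0. Let S_0 = {z ∈ ℝ^d : 1/2 < z·e_d ≤ 1}. Suppose that ‖T[f]‖_{L^q(L^r),N} ≤ A ‖f‖_{L^p(ℝ^d)} for every nonnegative measurable f supported in S_0. Then there is a constant A' > 0 (depending only on d, p, q, r, C, A) such that ‖T[f]‖_{L^q(L^r),N} ≤ A' ‖f‖_{L^p(ℝ^d)} for every nonnegative measurable function f on ℝ^d. -/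
open MeasureTheory ENNReal

noncomputable section

/-- The slab `S₀ = {z ∈ ℝ^d : 1/2 < z·e_d ≤ 1}`. -/
def S₀ (n : ℕ) : Set (Euc n × ℝ) := {z | 1/2 < z.2 ∧ z.2 ≤ 1}

/-- Scaling of the Lebesgue integral. -/
lemma lintegral_scale {E : Type*} [NormedAddCommGroup E] [NormedSpace ℝ E] [MeasurableSpace E]
    [BorelSpace E] [FiniteDimensional ℝ E] (μ : Measure E) [μ.IsAddHaarMeasure]
    (c : ℝ) (hc : 0 < c) (h : E → ℝ≥0∞) :
    ∫⁻ x, h (c • x) ∂μ = ENNReal.ofReal c ^ (-(Module.finrank ℝ E : ℝ)) * ∫⁻ x, h x ∂μ := by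
  have he : MeasurableEmbedding (fun x : E => c • x) := measurableEmbedding_const_smul₀ hc.ne'
  rw [← he.lintegral_map, Measure.map_addHaar_smul μ hc.ne', lintegral_smul_measure, smul_eq_mul]
  congr 1
  rw [abs_of_pos (by positivity), ENNReal.ofReal_inv_of_pos (by positivity),
    ENNReal.ofReal_pow hc.le, ENNReal.rpow_neg, ENNReal.rpow_natCast]

/-- Weighted bound for powers of a series. -/
lemma tsum_rpow_le (w a : ℕ → ℝ≥0∞) (hw0 : ∀ k, w k ≠ 0) (hwt : ∀ k, w k ≠ ∞) (s : ℝ)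
    (hs : 0 < s) :
    (∑' k, a k) ^ s ≤ (∑' k, w k) ^ s * ∑' k, ((w k)⁻¹ * a k) ^ s := by
  have h1 : ∑' k, a k ≤ (∑' k, w k) * ⨆ k, (w k)⁻¹ * a k := by
    rw [← ENNReal.tsum_mul_right]
    refine ENNReal.tsum_le_tsum fun k => ?_
    calc a k = w k * ((w k)⁻¹ * a k) := by
          rw [← mul_assoc, ENNReal.mul_inv_cancel (hw0 k) (hwt k), one_mul]
      _ ≤ _ := by gcongr; exact le_iSup (fun k => (w k)⁻¹ * a k) k
  calc (∑' k, a k) ^ s ≤ ((∑' k, w k) * ⨆ k, (w k)⁻¹ * a k) ^ s := by gcongr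
    _ = (∑' k, w k) ^ s * (⨆ k, (w k)⁻¹ * a k) ^ s := ENNReal.mul_rpow_of_nonneg _ _ hs.le
    _ ≤ _ := by
      gcongr
      rw [← ENNReal.orderIsoRpow_apply s hs, OrderIso.map_iSup]
      exact iSup_le fun k => by
        rw [ENNReal.orderIsoRpow_apply]
        exact ENNReal.le_tsum (f := fun k => ((w k)⁻¹ * a k) ^ s) k

/-- Subadditivity of `x ^ s`, `0 < s ≤ 1`, for series. -/
lemma tsum_rpow_le_one (b : ℕ → ℝ≥0∞) (s : ℝ) (hs : 0 < s) (hs1 : s ≤ 1) :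
    (∑' k, b k) ^ s ≤ ∑' k, b k ^ s := by
  have hfin : ∀ t : Finset ℕ, (∑ k ∈ t, b k) ^ s ≤ ∑ k ∈ t, b k ^ s := by
    intro t
    induction t using Finset.induction_on with
    | empty => simp [hs]
    | insert i t hi ih =>
      rw [Finset.sum_insert hi, Finset.sum_insert hi]
      exact (ENNReal.rpow_add_le_add_rpow _ _ hs.le hs1).trans (by gcongr)
  rw [ENNReal.tsum_eq_iSup_sum, ← ENNReal.orderIsoRpow_apply s hs, OrderIso.map_iSup]
  refine iSup_le fun t => ?_
  rw [ENNReal.orderIsoRpow_apply]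
  exact (hfin t).trans (ENNReal.sum_le_tsum t)

/-- The rescaled piece of `f`. -/
def gPiece {n : ℕ} (f : Euc n × ℝ → ℝ≥0∞) (c : ℝ) : Euc n × ℝ → ℝ≥0∞ :=
  (S₀ n).indicator (fun z => f (c • z))

lemma measurableSet_S₀ (n : ℕ) : MeasurableSet (S₀ n) :=
  (measurableSet_lt measurable_const measurable_snd).inter
    (measurableSet_le measurable_snd measurable_const)

lemma measurable_gPiece {n : ℕ} {f : Euc n × ℝ → ℝ≥0∞} (hf : Measurable f) (c : ℝ) :
    Measurable (gPiece f c) :=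
  (hf.comp (measurable_const_smul c)).indicator (measurableSet_S₀ n)

lemma measurable_xrayT {n : ℕ} {f : Euc n × ℝ → ℝ≥0∞} (hf : Measurable f) :
    Measurable (fun z : Euc n × Euc n => xrayT f z.2 z.1) := by
  unfold xrayT
  apply Measurable.lintegral_prod_right' (f := fun w : (Euc n × Euc n) × ℝ =>
    f (w.1.1 + w.2 • w.1.2, w.2))
  apply hf.comp
  fun_prop

lemma xrayT_piece {n : ℕ} (f : Euc n × ℝ → ℝ≥0∞) (c : ℝ) (hc : 0 < c) (ξ x : Euc n) :
    ∫⁻ t in Set.Ioc (c / 2) c, f (x + t • ξ, t)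
      = ENNReal.ofReal c * xrayT (gPiece f c) ξ (c⁻¹ • x) := by
  have h1 : xrayT (gPiece f c) ξ (c⁻¹ • x)
      = ∫⁻ t, (Set.Ioc (c / 2) c).indicator (fun t => f (x + t • ξ, t)) (c • t) := by
    unfold xrayT
    rw [← lintegral_indicator measurableSet_Ioc]
    refine lintegral_congr fun t => ?_
    have key : f (c • (c⁻¹ • x + t • ξ, t)) = f (x + (c • t) • ξ, c • t) := by
      congr 1
      ext1
      · simp [smul_smul, hc.ne']
      · simp
    have e1 : c • t ∈ Set.Ioc (c / 2) c ↔ (1/2 < t ∧ t ≤ 1) := by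
      simp only [smul_eq_mul, Set.mem_Ioc]
      constructor
      · rintro ⟨h1, h2⟩
        constructor <;> nlinarith
      · rintro ⟨h1, h2⟩
        constructor <;> nlinarith
    by_cases ht : 1/2 < t ∧ t ≤ 1
    · rw [Set.indicator_of_mem (show t ∈ Set.Ioc (0:ℝ) 1 from ⟨by linarith [ht.1], ht.2⟩),
        Set.indicator_of_mem (e1.2 ht), gPiece,
        Set.indicator_of_mem (show (c⁻¹ • x + t • ξ, t) ∈ S₀ n from ht), key]
    · rw [Set.indicator_of_notMem (fun h => ht (e1.1 h))]
      rw [Set.indicator_apply_eq_zero]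
      intro _
      exact Set.indicator_of_notMem (show (c⁻¹ • x + t • ξ, t) ∉ S₀ n from ht) _
  rw [h1, lintegral_scale volume c hc, lintegral_indicator measurableSet_Ioc, ← mul_assoc]
  have hc0 : ENNReal.ofReal c ≠ 0 := by simpa using hc
  simp only [Module.finrank_self, Nat.cast_one, ENNReal.rpow_neg_one]
  rw [ENNReal.mul_inv_cancel hc0 ENNReal.ofReal_ne_top, one_mul]

lemma xrayT_le_tsum {n : ℕ} (f : Euc n × ℝ → ℝ≥0∞) (ξ x : Euc n) :
    xrayT f ξ x ≤ ∑' k : ℕ, ENNReal.ofReal ((2⁻¹:ℝ) ^ k) *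
      xrayT (gPiece f ((2⁻¹:ℝ) ^ k)) ξ (((2⁻¹:ℝ) ^ k)⁻¹ • x) := by
  have hsub : Set.Ioc (0:ℝ) 1 ⊆ ⋃ k : ℕ, Set.Ioc ((2⁻¹:ℝ) ^ k / 2) ((2⁻¹:ℝ) ^ k) := by
    rintro t ⟨h0, h1⟩
    obtain ⟨k, hk1, hk2⟩ := exists_nat_pow_near_of_lt_one h0 h1
      (show (0:ℝ) < 2⁻¹ by norm_num) (by norm_num)
    refine Set.mem_iUnion.2 ⟨k, ?_, hk2⟩
    rw [pow_succ] at hk1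
    linarith
  calc xrayT f ξ x ≤ ∫⁻ t in ⋃ k : ℕ, Set.Ioc ((2⁻¹:ℝ) ^ k / 2) ((2⁻¹:ℝ) ^ k),
        f (x + t • ξ, t) := lintegral_mono_set hsub
    _ ≤ ∑' k : ℕ, ∫⁻ t in Set.Ioc ((2⁻¹:ℝ) ^ k / 2) ((2⁻¹:ℝ) ^ k), f (x + t • ξ, t) :=
        lintegral_iUnion_le _ _
    _ = _ := by
        congr 1
        ext1 k
        exact xrayT_piece f _ (by positivity) ξ x

lemma piece_bound {n : ℕ} (C p q r : ℝ) (hp : 0 < p) (hq : 0 < q) (hr : 0 < r)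
    (A : ℝ≥0∞)
    (hbound : ∀ f : Euc n × ℝ → ℝ≥0∞, Measurable f →
      (∀ z, z ∉ S₀ n → f z = 0) →
      nikodymMixedNorm q r C f ≤ A * (∫⁻ z, f z ^ p) ^ (1 / p))
    (f : Euc n × ℝ → ℝ≥0∞) (hf : Measurable f) (c : ℝ) (hc : 0 < c) :
    ∫⁻ x : Euc n, (∫⁻ ξ in Metric.ball (0 : Euc n) C,
      (xrayT (gPiece f c) ξ (c⁻¹ • x)) ^ r) ^ (q / r)
      ≤ A ^ q * ENNReal.ofReal c ^ (n - (n + 1) * q / p) * (∫⁻ z, f z ^ p) ^ (q / p) := by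
  have hc0 : ENNReal.ofReal c ≠ 0 := by simpa using hc
  have hct : ENNReal.ofReal c ≠ ∞ := ENNReal.ofReal_ne_top
  rw [lintegral_scale volume c⁻¹ (inv_pos.2 hc) (fun x => (∫⁻ ξ in Metric.ball (0 : Euc n) C,
      (xrayT (gPiece f c) ξ x) ^ r) ^ (q / r))]
  have h1 := hbound (gPiece f c) (measurable_gPiece hf c)
    (fun z hz => Set.indicator_of_notMem hz _)
  have h2 : ∫⁻ z, gPiece f c z ^ p ≤
      ENNReal.ofReal c ^ (-((n:ℝ) + 1)) * ∫⁻ z, f z ^ p := by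
    calc ∫⁻ z, gPiece f c z ^ p ≤ ∫⁻ z, f (c • z) ^ p := by
          refine lintegral_mono fun z => ?_
          dsimp only
          gcongr
          exact Set.indicator_le_self _ _ z
      _ = _ := by
          have : (volume : Measure (Euc n × ℝ)).IsAddHaarMeasure := by
            rw [Measure.volume_eq_prod]
            exact Measure.prod.instIsAddHaarMeasure _ _
          have := lintegral_scale (volume : Measure (Euc n × ℝ)) c hc (fun z => f z ^ p)
          rw [this]
          simp
  unfold nikodymMixedNorm at h1
  have h3 := ENNReal.rpow_le_rpow (h1.trans (mul_le_mul_right (ENNReal.rpow_le_rpow h2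
    (by positivity : 0 ≤ 1 / p)) A)) hq.le
  rw [← ENNReal.rpow_mul, one_div_mul_cancel hq.ne', ENNReal.rpow_one] at h3
  refine (mul_le_mul_right h3 _).trans_eq ?_
  rw [ENNReal.mul_rpow_of_nonneg _ _ hq.le, ← ENNReal.rpow_mul,
    ENNReal.mul_rpow_of_nonneg _ _ (by positivity), ← ENNReal.rpow_mul,
    ENNReal.ofReal_inv_of_pos hc, ENNReal.inv_rpow, ← ENNReal.rpow_neg, neg_neg,
    finrank_euclideanSpace_fin]
  have h4 : ENNReal.ofReal c ^ (n - (n + 1) * q / p : ℝ) =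
      ENNReal.ofReal c ^ (n:ℝ) * ENNReal.ofReal c ^ (-((n:ℝ) + 1) * (1 / p * q)) := by
    rw [← ENNReal.rpow_add _ _ hc0 hct]
    congr 1
    ring
  rw [h4, show 1 / p * q = q / p by ring]
  ring

lemma tsum_pow_ne_top (a : ℝ) (ha : 0 < a) :
    ∑' k : ℕ, ENNReal.ofReal ((2⁻¹:ℝ) ^ k) ^ a ≠ ∞ := by
  have : ∀ k : ℕ, ENNReal.ofReal ((2⁻¹:ℝ) ^ k) ^ a = ((2⁻¹ : ℝ≥0∞) ^ a) ^ k := by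
    intro k
    rw [ENNReal.ofReal_pow (by norm_num), ← ENNReal.rpow_natCast, ← ENNReal.rpow_natCast,
      ← ENNReal.rpow_mul, ← ENNReal.rpow_mul, mul_comm, ENNReal.ofReal_inv_of_pos (by norm_num)]
    simp
  simp_rw [this]
  rw [ENNReal.tsum_geometric, ENNReal.inv_ne_top]
  exact (tsub_pos_of_lt (ENNReal.rpow_lt_one (by simp) ha)).ne'

lemma main_bound {n : ℕ} (C p q r : ℝ) (hp : 0 < p) (hq : 0 < q) (hqr : q ≤ r)
    (e : ℝ) (he : e = q + n - (n + 1) * q / p) (A : ℝ≥0∞)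
    (hbound : ∀ f : Euc n × ℝ → ℝ≥0∞, Measurable f →
      (∀ z, z ∉ S₀ n → f z = 0) →
      nikodymMixedNorm q r C f ≤ A * (∫⁻ z, f z ^ p) ^ (1 / p))
    (f : Euc n × ℝ → ℝ≥0∞) (hf : Measurable f) :
    nikodymMixedNorm q r C f ≤
      ((∑' k : ℕ, ENNReal.ofReal ((2⁻¹:ℝ) ^ k) ^ (e / (2 * q))) ^ q * (A ^ q *
        ∑' k : ℕ, ENNReal.ofReal ((2⁻¹:ℝ) ^ k) ^ (e / 2))) ^ (1 / q) *
      (∫⁻ z, f z ^ p) ^ (1 / p) := by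
  have hr : 0 < r := hq.trans_le hqr
  set c : ℕ → ℝ≥0∞ := fun k => ENNReal.ofReal ((2⁻¹:ℝ) ^ k) with hcdef
  have hc0 : ∀ k, c k ≠ 0 := fun k => by simp [hcdef]
  have hct : ∀ k, c k ≠ ∞ := fun k => ENNReal.ofReal_ne_top
  set w : ℕ → ℝ≥0∞ := fun k => c k ^ (e / (2 * q)) with hwdef
  have hw0 : ∀ k, w k ≠ 0 := fun k => (ENNReal.rpow_pos (pos_iff_ne_zero.2 (hc0 k)) (hct k)).ne'
  have hwt : ∀ k, w k ≠ ∞ := fun k => ENNReal.rpow_ne_top_of_ne_zero (hc0 k) (hct k)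
  let X : ℕ → Euc n → Euc n → ℝ≥0∞ := fun k ξ x =>
    xrayT (gPiece f ((2⁻¹:ℝ) ^ k)) ξ (((2⁻¹:ℝ) ^ k)⁻¹ • x)
  have hXm : ∀ k, Measurable (fun z : Euc n × Euc n => X k z.2 z.1) := by
    intro k
    refine (measurable_xrayT (measurable_gPiece hf ((2⁻¹:ℝ) ^ k))).comp
      (g := fun z : Euc n × Euc n => xrayT (gPiece f ((2⁻¹:ℝ) ^ k)) z.2 z.1)
      (f := fun z : Euc n × Euc n => (((2⁻¹:ℝ) ^ k)⁻¹ • z.1, z.2)) ?_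
    fun_prop
  let J : ℕ → Euc n → ℝ≥0∞ := fun k x => ∫⁻ ξ in Metric.ball (0 : Euc n) C, X k ξ x ^ r
  have hJm : ∀ k, Measurable (J k) := fun k =>
    Measurable.lintegral_prod_right' (f := fun z : Euc n × Euc n => X k z.2 z.1 ^ r)
      ((hXm k).pow_const r)
  have h1 : ∀ x, ∫⁻ ξ in Metric.ball (0 : Euc n) C, xrayT f ξ x ^ r ≤
      (∑' k, w k) ^ r * ∑' k, ((w k)⁻¹ * c k) ^ r * J k x := by
    intro x
    calc ∫⁻ ξ in Metric.ball (0 : Euc n) C, xrayT f ξ x ^ r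
        ≤ ∫⁻ ξ in Metric.ball (0 : Euc n) C, (∑' k, w k) ^ r *
            ∑' k, ((w k)⁻¹ * c k) ^ r * X k ξ x ^ r := by
          refine lintegral_mono fun ξ => ?_
          refine (ENNReal.rpow_le_rpow (xrayT_le_tsum f ξ x) hr.le).trans ?_
          refine (tsum_rpow_le w _ hw0 hwt r hr).trans_eq ?_
          congr 2
          ext1 k
          rw [← mul_assoc, ENNReal.mul_rpow_of_nonneg _ _ hr.le]
      _ = _ := by
          have hm : ∀ k, Measurable (fun ξ => ((w k)⁻¹ * c k) ^ r * X k ξ x ^ r) := fun k =>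
            (((hXm k).comp (measurable_prodMk_left (x := x))).pow_const r).const_mul _
          rw [lintegral_const_mul _ (Measurable.ennreal_tsum hm),
            lintegral_tsum (fun k => (hm k).aemeasurable)]
          congr 2
          ext1 k
          exact lintegral_const_mul _
            (((hXm k).comp (measurable_prodMk_left (x := x))).pow_const r)
  have h2 : ∀ x, (∫⁻ ξ in Metric.ball (0 : Euc n) C, xrayT f ξ x ^ r) ^ (q / r) ≤
      (∑' k, w k) ^ q * ∑' k, ((w k)⁻¹ * c k) ^ q * J k x ^ (q / r) := by
    intro x
    refine (ENNReal.rpow_le_rpow (h1 x) (by positivity)).trans ?_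
    rw [ENNReal.mul_rpow_of_nonneg _ _ (by positivity), ← ENNReal.rpow_mul,
      mul_div_cancel₀ _ hr.ne']
    gcongr
    refine (tsum_rpow_le_one _ _ (by positivity) ((div_le_one hr).2 hqr)).trans_eq ?_
    congr 1
    ext1 k
    rw [ENNReal.mul_rpow_of_nonneg _ _ (by positivity), ← ENNReal.rpow_mul,
      mul_div_cancel₀ _ hr.ne']
  have h3 : ∫⁻ x, (∫⁻ ξ in Metric.ball (0 : Euc n) C, xrayT f ξ x ^ r) ^ (q / r) ≤
      (∑' k, w k) ^ q * ∑' k, ((w k)⁻¹ * c k) ^ q * ∫⁻ x, J k x ^ (q / r) := by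
    refine (lintegral_mono h2).trans_eq ?_
    have hm : ∀ k, Measurable (fun x => ((w k)⁻¹ * c k) ^ q * J k x ^ (q / r)) := fun k =>
      ((hJm k).pow_const _).const_mul _
    rw [lintegral_const_mul _ (Measurable.ennreal_tsum hm),
      lintegral_tsum (fun k => (hm k).aemeasurable)]
    congr 2
    ext1 k
    exact lintegral_const_mul _ ((hJm k).pow_const _)
  have h4 : ∀ k, ((w k)⁻¹ * c k) ^ q * ∫⁻ x, J k x ^ (q / r) ≤
      A ^ q * (∫⁻ z, f z ^ p) ^ (q / p) * c k ^ (e / 2) := by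
    intro k
    refine (mul_le_mul_right (piece_bound C p q r hp hq hr A hbound f hf ((2⁻¹:ℝ) ^ k)
      (by positivity)) _).trans_eq ?_
    have h5 : ((w k)⁻¹ * c k) ^ q * c k ^ (n - (n + 1) * q / p) = c k ^ (e / 2) := by
      rw [hwdef]
      dsimp only
      rw [← ENNReal.rpow_neg, ENNReal.mul_rpow_of_nonneg _ _ hq.le, ← ENNReal.rpow_mul,
        ← ENNReal.rpow_add _ _ (hc0 k) (hct k), ← ENNReal.rpow_add _ _ (hc0 k) (hct k)]
      congr 1
      have : -(e / (2 * q)) * q = -(e / 2) := by field_simp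
      rw [this]
      linarith
    rw [← h5]
    ring
  unfold nikodymMixedNorm
  have h6 : ((∫⁻ z, f z ^ p) ^ (1 / p)) = ((∫⁻ z, f z ^ p) ^ (q / p)) ^ (1 / q) := by
    rw [← ENNReal.rpow_mul]
    congr 1
    field_simp
  rw [h6, ← ENNReal.mul_rpow_of_nonneg _ _ (by positivity)]
  refine ENNReal.rpow_le_rpow ?_ (by positivity)
  refine h3.trans ((mul_le_mul_right (ENNReal.tsum_le_tsum h4) _).trans_eq ?_)
  rw [ENNReal.tsum_mul_left]
  ring

/-- If the Nikodym-order mixed norm bound holds for all nonnegative measurable `f`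
supported in the slab `S₀`, and `1 + (d-1)/q > d/p`, then it holds (with a
different constant) for all nonnegative measurable `f`. -/
theorem statement19 (d : ℕ) (hd : 2 ≤ d) (C : ℝ) (hC : 0 < C) (p q r : ℝ)
    (hp : 1 ≤ p) (hpq : p ≤ q) (hqr : q ≤ r)
    (hscaling : 1 + ((d:ℝ) - 1) / q > (d:ℝ) / p)
    (A : ℝ) (hA : 0 < A)
    (hbound : ∀ f : Euc (d - 1) × ℝ → ℝ≥0∞, Measurable f →
      (∀ z, z ∉ S₀ (d - 1) → f z = 0) →
      nikodymMixedNorm q r C f ≤ ENNReal.ofReal A * (∫⁻ z, f z ^ p) ^ (1 / p)) :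
    ∃ A' : ℝ, 0 < A' ∧ ∀ f : Euc (d - 1) × ℝ → ℝ≥0∞, Measurable f →
      nikodymMixedNorm q r C f ≤ ENNReal.ofReal A' * (∫⁻ z, f z ^ p) ^ (1 / p) := by
  have hp0 : 0 < p := by linarith
  have hq0 : 0 < q := by linarith
  obtain ⟨n, hn⟩ : ∃ n, n = d - 1 := ⟨_, rfl⟩
  rw [← hn] at hbound ⊢
  have hdn : (d:ℝ) = n + 1 := by
    have : d = n + 1 := by omega
    rw [this]
    push_cast
    ring
  rw [hdn] at hscaling
  have he : 0 < q + n - (n + 1) * q / p := by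
    have h := mul_lt_mul_of_pos_right hscaling hq0
    have h1 : (1 + ((n:ℝ) + 1 - 1) / q) * q = q + n := by field_simp; ring
    have h2 : ((n:ℝ) + 1) / p * q = (n + 1) * q / p := by ring
    rw [h1, h2] at h
    linarith
  set e := q + n - (n + 1) * q / p with hedef
  have hmain := main_bound C p q r hp0 hq0 hqr e hedef (ENNReal.ofReal A) hbound
  set K := ((∑' k : ℕ, ENNReal.ofReal ((2⁻¹:ℝ) ^ k) ^ (e / (2 * q))) ^ q * (ENNReal.ofReal A ^ q *
        ∑' k : ℕ, ENNReal.ofReal ((2⁻¹:ℝ) ^ k) ^ (e / 2))) ^ (1 / q) with hK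
  have hKt : K ≠ ∞ := by
    refine ENNReal.rpow_ne_top_of_nonneg (by positivity) (ENNReal.mul_ne_top ?_
      (ENNReal.mul_ne_top ?_ (tsum_pow_ne_top _ (by positivity))))
    · exact ENNReal.rpow_ne_top_of_nonneg hq0.le (tsum_pow_ne_top _ (by positivity))
    · exact ENNReal.rpow_ne_top_of_nonneg hq0.le ENNReal.ofReal_ne_top
  refine ⟨K.toReal + 1, by positivity, fun f hf => (hmain f hf).trans ?_⟩
  gcongr
  calc K = ENNReal.ofReal K.toReal := (ENNReal.ofReal_toReal hKt).symm
    _ ≤ _ := ENNReal.ofReal_le_ofReal (by linarith)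

end
end
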